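/- arXiv:2306.09543 — 5 statements merged into one kernel-verified Lean document; each statement's English description precedes it below -/
import Mathlib

section
/- Let α be a finite type and let σ₀ and τ be fixed-point-free involutions of α (i.e. σ₀² = 1, τ² = 1, and σ₀ x ≠ x and τ x ≠ x for all x). Set ρ = τσ₀. Then: (i) σ₀ρσ₀⁻¹ = ρ⁻¹; (ii) for every x ∈ α, x and σ₀(x) do NOT lie in the same cycle of ρ (¬ρ.SameCycle x (σ₀ x)), while the cycle of ρ containing σ₀(x) has the same length as the cycle containing x; consequently (iii) the number of cycles of ρ, i.e. Multiset.card ρ.cycleType, is even. -/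
/-!
Conjugation by `σ₀` inverts `ρ = τ * σ₀`, so `ρ ^ n * σ₀` is conjugate by a power of `ρ` to `σ₀`
if `n` is even and to `ρ * σ₀ = τ` if `n` is odd, as for the reflections of a dihedral group.
If `ρ ^ n` sent `σ₀ x` to `x`, then `ρ ^ n * σ₀` would fix `x`, whereas no conjugate of `σ₀` or `τ`
has a fixed point. Hence the involution `c ↦ σ₀ * c⁻¹ * σ₀⁻¹` of the set of cycles of `ρ`, which
sends the cycle of `x` to that of `σ₀ x`, fixes no cycle.
-/

section Group

variable {G : Type*} [Group G] {r s t : G}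

theorem conj_mul_eq_inv_of_sq_eq_one (hs : s ^ 2 = 1) (ht : t ^ 2 = 1) :
    s * (t * s) * s⁻¹ = (t * s)⁻¹ := by
  have hs_inv : s⁻¹ = s := inv_eq_of_mul_eq_one_left (by rw [← sq, hs])
  have ht_inv : t⁻¹ = t := inv_eq_of_mul_eq_one_left (by rw [← sq, ht])
  rw [mul_inv_rev, ← mul_assoc, mul_inv_cancel_right, hs_inv, ht_inv]

theorem zpow_mul_zpow_inv_of_conj_eq_inv (h : s * r * s⁻¹ = r⁻¹) (k : ℤ) :
    r ^ k * s * (r ^ k)⁻¹ = r ^ (2 * k) * s := by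
  have hk : s * (r ^ k)⁻¹ = r ^ k * s := by
    rw [← mul_inv_eq_iff_eq_mul, ← zpow_neg, ← conj_zpow, h, inv_zpow', neg_neg]
  rw [mul_assoc, hk, ← mul_assoc, ← zpow_add, two_mul]

theorem isConj_zpow_mul_of_conj_eq_inv (h : s * r * s⁻¹ = r⁻¹) (n : ℤ) :
    IsConj s (r ^ n * s) ∨ IsConj (r * s) (r ^ n * s) := by
  obtain ⟨k, rfl | rfl⟩ := Int.even_or_odd' n
  · exact .inl (isConj_iff.2 ⟨r ^ k, zpow_mul_zpow_inv_of_conj_eq_inv h k⟩)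
  · refine .inr (isConj_iff.2 ⟨r ^ k, ?_⟩)
    calc r ^ k * (r * s) * (r ^ k)⁻¹
        = r * (r ^ k * s * (r ^ k)⁻¹) := by
          simp only [← mul_assoc, (Commute.self_zpow r k).eq]
      _ = r ^ (2 * k + 1) * s := by
          rw [zpow_mul_zpow_inv_of_conj_eq_inv h, ← mul_assoc, ← zpow_one_add, add_comm]

end Group

theorem even_card_of_involution {β : Type*} {s : Finset β} (g : β → β)
    (hmem : ∀ a ∈ s, g a ∈ s) (hinv : ∀ a ∈ s, g (g a) = a) (hne : ∀ a ∈ s, g a ≠ a) :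
    Even s.card := by
  have hsum : ∑ _a ∈ s, (1 : ZMod 2) = 0 :=
    Finset.sum_involution (fun a _ ↦ g a) (fun _ _ ↦ by decide) (fun a ha _ ↦ hne a ha) hmem hinv
  rwa [Finset.sum_const, nsmul_one, ZMod.natCast_eq_zero_iff_even] at hsum

section Perm

open Equiv Equiv.Perm

variable {α : Type*} {ρ σ τ : Perm α}

theorem mem_derangements_of_isConj (h : IsConj σ τ) (hσ : σ ∈ derangements α) :
    τ ∈ derangements α := by
  obtain ⟨c, rfl⟩ := isConj_iff.1 h
  exact fun x hx ↦ hσ (c⁻¹ x) (eq_inv_iff_eq.2 hx)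

theorem not_sameCycle_apply_of_conj_eq_inv (h : σ * ρ * σ⁻¹ = ρ⁻¹)
    (hσ : σ ∈ derangements α) (hρσ : ρ * σ ∈ derangements α) (x : α) :
    ¬ ρ.SameCycle x (σ x) := by
  intro hx
  obtain ⟨n, hn⟩ : ρ.SameCycle (σ x) x := hx.symm
  have hder : ρ ^ n * σ ∈ derangements α :=
    (isConj_zpow_mul_of_conj_eq_inv h n).elim
      (mem_derangements_of_isConj · hσ) (mem_derangements_of_isConj · hρσ)
  exact hder x hn

theorem conj_cycleOf [DecidableRel ρ.SameCycle] [DecidableRel (σ * ρ * σ⁻¹).SameCycle] (x : α) :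
    σ * ρ.cycleOf x * σ⁻¹ = (σ * ρ * σ⁻¹).cycleOf (σ x) := by
  ext y
  simp [cycleOf_apply, sameCycle_conj, apply_ite σ]

theorem conj_inv_cycleOf_of_conj_eq_inv [DecidableRel ρ.SameCycle]
    (h : σ * ρ * σ⁻¹ = ρ⁻¹) (x : α) :
    σ * (ρ.cycleOf x)⁻¹ * σ⁻¹ = ρ.cycleOf (σ x) := by
  classical
  have hinv : σ * ρ⁻¹ * σ⁻¹ = ρ := by rw [← conj_inv, h, inv_inv]
  rw [cycleOf_inv, conj_cycleOf]
  congr!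

variable [Fintype α] [DecidableEq α]

theorem card_support_cycleOf_apply_of_conj_eq_inv (h : σ * ρ * σ⁻¹ = ρ⁻¹) (x : α) :
    (ρ.cycleOf (σ x)).support.card = (ρ.cycleOf x).support.card := by
  rw [← conj_inv_cycleOf_of_conj_eq_inv h, card_support_conj, support_inv]

theorem apply_mem_support_iff_of_conj_eq_inv (h : σ * ρ * σ⁻¹ = ρ⁻¹) {x : α} :
    σ x ∈ ρ.support ↔ x ∈ ρ.support := by
  calc σ x ∈ ρ.support
      ↔ σ x ∈ (σ * ρ * σ⁻¹).support := by rw [h, support_inv]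
    _ ↔ x ∈ ρ.support := by rw [support_conj, Finset.mem_map_equiv, symm_apply_apply]

theorem exists_cycleOf_eq_of_mem_cycleFactorsFinset {c : Perm α} (hc : c ∈ ρ.cycleFactorsFinset) :
    ∃ x ∈ ρ.support, ρ.cycleOf x = c := by
  obtain ⟨x, hx⟩ := (mem_cycleFactorsFinset_iff.1 hc).1.nonempty_support
  exact ⟨x, mem_cycleFactorsFinset_support_le hc hx, (cycle_is_cycleOf hx hc).symm⟩

theorem even_card_cycleType_of_conj_eq_inv (hσ : σ ^ 2 = 1) (h : σ * ρ * σ⁻¹ = ρ⁻¹)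
    (hne : ∀ x ∈ ρ.support, ¬ ρ.SameCycle x (σ x)) : Even (Multiset.card ρ.cycleType) := by
  have hswap (x : α) : σ * (ρ.cycleOf x)⁻¹ * σ⁻¹ = ρ.cycleOf (σ x) :=
    conj_inv_cycleOf_of_conj_eq_inv h x
  have hsupp {x : α} (hx : x ∈ ρ.support) : σ x ∈ ρ.support :=
    (apply_mem_support_iff_of_conj_eq_inv h).2 hx
  rw [cycleType_def, Multiset.card_map, Finset.card_val]
  refine even_card_of_involution (fun c ↦ σ * c⁻¹ * σ⁻¹) ?_ ?_ ?_
  all_goals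
    intro c hc
    obtain ⟨x, hx, rfl⟩ := exists_cycleOf_eq_of_mem_cycleFactorsFinset hc
  · rw [hswap, cycleOf_mem_cycleFactorsFinset_iff]
    exact hsupp hx
  · rw [hswap, hswap, ← mul_apply, ← sq, hσ, one_apply]
  · rw [hswap, ne_comm, ne_eq, ← sameCycle_iff_cycleOf_eq_of_mem_support hx (hsupp hx)]
    exact hne x hx

end Perm

/-- If σ₀ and τ are fixed-point-free involutions of a finite type α and
ρ = τσ₀, then σ₀ conjugates ρ to ρ⁻¹, no point lies in the same cycle of ρ
as its image under σ₀ (while the two cycles have the same length), and the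
number of cycles of ρ is even. -/
theorem product_of_two_fixed_point_free_involutions
    (α : Type*) [Fintype α] [DecidableEq α]
    (σ₀ τ : Equiv.Perm α)
    (hσ₀ : σ₀ ^ 2 = 1) (hσ₀free : ∀ x : α, σ₀ x ≠ x)
    (hτ : τ ^ 2 = 1) (hτfree : ∀ x : α, τ x ≠ x) :
    σ₀ * (τ * σ₀) * σ₀⁻¹ = (τ * σ₀)⁻¹ ∧
    (∀ x : α, ¬ (τ * σ₀).SameCycle x (σ₀ x) ∧
      (((τ * σ₀).cycleOf (σ₀ x)).support.card =
        ((τ * σ₀).cycleOf x).support.card)) ∧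
    Even (Multiset.card (τ * σ₀).cycleType) := by
  have hconj : σ₀ * (τ * σ₀) * σ₀⁻¹ = (τ * σ₀)⁻¹ := conj_mul_eq_inv_of_sq_eq_one hσ₀ hτ
  have hmul : τ * σ₀ * σ₀ = τ := by rw [mul_assoc, ← sq, hσ₀, mul_one]
  have hder : τ * σ₀ * σ₀ ∈ derangements α := hmul.symm ▸ hτfree
  have hne (x : α) : ¬ (τ * σ₀).SameCycle x (σ₀ x) :=
    not_sameCycle_apply_of_conj_eq_inv hconj hσ₀free hder x
  exact ⟨hconj, fun x ↦ ⟨hne x, card_support_cycleOf_apply_of_conj_eq_inv hconj x⟩,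
    even_card_cycleType_of_conj_eq_inv hσ₀ hconj fun x _ ↦ hne x⟩
end

section
/- For every natural number g ≥ 2 there exist permutations σ₀, σ₁ of Fin (8g − 4) such that: the cycle type of σ₀ consists of 4g − 2 copies of 2 (σ₀ is a product of 4g − 2 disjoint transpositions covering all points); the cycle type of σ₁ consists of 2g − 1 copies of 4; σ₁σ₀ is a single cycle of length 8g − 4 (in particular the subgroup generated by σ₀ and σ₁ is transitive); and the cycle type of σ₁²σ₀ is the multiset {4g − 2, 4g − 2} (two disjoint cycles of equal length). (This is the combinatorial content of the existence, for every genus g ≥ 2, of a uniform filling curve in general position whose complement is a single face, whose length function is minimized on a surface uniformized by a surface subgroup of the triangle group Δ(2,4,8g−4).) -/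
/-!
A closed curve in general position is recorded by its signed Gauss code: the cyclic sequence of its
passages through crossings, the pairing of the two passages through each crossing, and a sign for
each passage. The half-edges of the curve carry two permutations, `edge` and `vertex`, and
`vertex ^ 2 * edge` follows the curve straight ahead, forwards on outgoing and backwards on incoming
half-edges; so it has two cycles of equal length as soon as there is a single curve.

Inserting the word `abab` with two negative and then two positive signs at one point of the curve
amounts to a connected sum with a torus. It adds four passages, and it only enlarges the boundaries
running along the two sides of the edge where it is inserted: two half-edges are inserted into one
and six into the other. Hence a code with a single face keeps a single face while its genus grows
by one, and an explicit code of genus two starts the induction. No such code exists in genus one.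
-/

section Cycles

open Equiv Equiv.Perm Function

variable {α β : Type*}

theorem minimalPeriod_eq_of_semiconj_of_injective {f : α → α} {g : β → β} {ι : α → β}
    (h : Semiconj ι f g) (hι : Injective ι) (x : α) :
    minimalPeriod g (ι x) = minimalPeriod f x := by
  refine minimalPeriod_eq_minimalPeriod_iff.2 fun n => ?_
  rw [IsPeriodicPt, IsFixedPt, ← (h.iterate_right n).eq, hι.eq_iff]
  rfl

theorem minimalPeriod_eq_card_of_isCycleOn {f : Perm α} {s : Finset α} (hf : f.IsCycleOn s)
    {x : α} (hx : x ∈ s) : minimalPeriod f x = s.card := by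
  refine Nat.dvd_right_iff_eq.1 fun n => ?_
  rw [← isPeriodicPt_iff_minimalPeriod_dvd, ← hf.pow_apply_eq hx, IsPeriodicPt, IsFixedPt,
    iterate_eq_pow]

theorem isCycleOn_univ_of_forall_sameCycle {f : Perm α} {x : α} (h : ∀ y, f.SameCycle x y) :
    f.IsCycleOn Set.univ :=
  ⟨Set.bijOn_univ.2 f.bijective, fun y _ z _ => (h y).symm.trans (h z)⟩

theorem sameCycle_map {f : Perm α} {g : Perm β} {ι : α → β}
    (hstep : ∀ x, g.SameCycle (ι x) (ι (f x))) {x y : α} (h : f.SameCycle x y) :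
    g.SameCycle (ι x) (ι y) := by
  obtain ⟨i, rfl⟩ := h
  induction i with
  | zero => exact SameCycle.rfl
  | succ n ih =>
    rw [zpow_add_one, (Commute.zpow_self f n).eq, mul_apply]
    exact ih.trans (hstep _)
  | pred n ih =>
    rw [zpow_sub_one, (Commute.zpow_left (Commute.refl f) _).inv_right.eq, mul_apply]
    have hback := hstep (f⁻¹ ((f ^ (-n : ℤ)) x))
    rw [coe_inv, apply_symm_apply] at hback
    exact ih.trans hback.symm

theorem sameCycle_of_isChain {f : Perm α} {x : α} {l : List α}
    (h : List.IsChain (f · = ·) (x :: l)) : ∀ y ∈ l, f.SameCycle x y := by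
  induction l generalizing x with
  | nil => simp
  | cons z l ih =>
    obtain ⟨rfl, hl⟩ := List.isChain_cons_cons.1 h
    have hz : f.SameCycle x (f x) := sameCycle_apply_right.2 SameCycle.rfl
    exact List.forall_mem_cons.2 ⟨hz, fun y hy => hz.trans (ih hl y hy)⟩

theorem isCycleOn_univ_of_forall_exists_sameCycle {f : Perm α} {g : Perm β} {ι : α → β}
    (hf : f.IsCycleOn Set.univ) (hstep : ∀ x, g.SameCycle (ι x) (ι (f x)))
    (hmeet : ∀ y, ∃ x, g.SameCycle (ι x) y) : g.IsCycleOn Set.univ := by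
  refine ⟨Set.bijOn_univ.2 g.bijective, fun y _ z _ => ?_⟩
  obtain ⟨x, hx⟩ := hmeet y
  obtain ⟨w, hw⟩ := hmeet z
  exact (hx.symm.trans (sameCycle_map hstep (hf.2 trivial trivial))).trans hw

theorem isCycleOn_univ_permCongr {f : Perm α} (hf : f.IsCycleOn Set.univ) (e : α ≃ β) :
    (e.permCongr f).IsCycleOn Set.univ := by
  refine isCycleOn_univ_of_forall_exists_sameCycle (ι := e) hf (fun x => ?_) fun y => ?_
  · exact ⟨1, by simp⟩
  · exact ⟨e.symm y, by simp [SameCycle.rfl]⟩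

theorem exists_mem_closure_pair_apply_eq {σ τ : Perm α} (h : (τ * σ).IsCycleOn Set.univ)
    (x y : α) : ∃ π ∈ Subgroup.closure ({σ, τ} : Set (Perm α)), π x = y := by
  obtain ⟨i, hi⟩ := h.2 (Set.mem_univ x) (Set.mem_univ y)
  refine ⟨_, Subgroup.zpow_mem _ (Subgroup.mul_mem _ ?_ ?_) i, hi⟩
  · exact Subgroup.mem_closure_of_mem (by simp)
  · exact Subgroup.mem_closure_of_mem (by simp)

variable [Fintype α] [DecidableEq α]

theorem cycleType_eq_replicate_of_minimalPeriod_eq {f : Perm α} {m : ℕ} (hm : 1 < m)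
    (h : ∀ x, minimalPeriod f x = m) :
    f.cycleType = Multiset.replicate (Fintype.card α / m) m := by
  have hlength : ∀ n ∈ f.cycleType, n = m := by
    intro n hn
    rw [cycleType_def, Multiset.mem_map] at hn
    obtain ⟨c, hc : c ∈ f.cycleFactorsFinset, rfl⟩ := hn
    obtain ⟨x, hx⟩ := (mem_cycleFactorsFinset_iff.1 hc).1.nonempty_support
    have hcycle : f.IsCycleOn c.support := by
      rw [cycle_is_cycleOf hx hc]
      exact isCycleOn_support_cycleOf f x
    exact (minimalPeriod_eq_card_of_isCycleOn hcycle hx).symm.trans (h x)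
  have hsupport : f.support = Finset.univ := by
    refine Finset.eq_univ_iff_forall.2 fun x => mem_support.2 fun hx => ?_
    exact hm.ne' ((h x).symm.trans (minimalPeriod_eq_one_iff_isFixedPt.2 hx))
  have hsum := sum_cycleType f
  rw [Multiset.eq_replicate_card.2 hlength, Multiset.sum_replicate, smul_eq_mul, hsupport,
    Finset.card_univ] at hsum
  rw [← hsum, Nat.mul_div_cancel _ (by omega)]
  exact Multiset.eq_replicate_card.2 hlength

theorem cycleType_eq_singleton_of_isCycleOn_univ [Nontrivial α] {f : Perm α}
    (hf : f.IsCycleOn Set.univ) : f.cycleType = {Fintype.card α} := by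
  rw [← Finset.coe_univ] at hf
  rw [cycleType_eq_replicate_of_minimalPeriod_eq Fintype.one_lt_card fun x =>
    minimalPeriod_eq_card_of_isCycleOn hf (Finset.mem_univ x), Nat.div_self Fintype.card_pos,
    Multiset.replicate_one]

theorem cycleType_permCongr [Fintype β] [DecidableEq β] (e : α ≃ β) (f : Perm α) :
    (e.permCongr f).cycleType = f.cycleType := by
  rw [← cycleType_extendDomain (e.trans (Equiv.subtypeUnivEquiv fun _ => trivial).symm)]
  congr 1

end Cycles

/-- A Gauss code of a system of oriented closed curves in general position on an oriented surface.
The points of `α` are the passages of the curves through crossings, `next` leads to the following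
passage on the same curve, and `partner` to the other passage through the same crossing. The sign
of a passage is `true` (positive) when the other strand crosses it from left to right. -/
structure SignedGaussCode (α : Type*) where
  next : Equiv.Perm α
  partner : α → α
  sign : α → Bool
  partner_partner : Function.Involutive partner
  sign_partner : ∀ t, sign (partner t) = !sign t

namespace SignedGaussCode

open Equiv Equiv.Perm Function

variable {α : Type*} (D : SignedGaussCode α)

/-- The involution exchanging the two halves of each edge. A half-edge is `(t, true)` when it leaves
the passage `t` and `(t, false)` when it arrives there. -/
def edge : Perm (α × Bool) where
  toFun
    | (t, true) => (D.next t, false)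
    | (t, false) => (D.next.symm t, true)
  invFun
    | (t, true) => (D.next t, false)
    | (t, false) => (D.next.symm t, true)
  left_inv := by rintro ⟨t, _ | _⟩ <;> simp
  right_inv := by rintro ⟨t, _ | _⟩ <;> simp

/-- The counterclockwise rotation of the half-edges around the crossings. It alternates between the
two strands, and the next half-edge after `(t, true)` is incoming when the other strand crosses `t`
from left to right, and outgoing otherwise. -/
def vertex : Perm (α × Bool) where
  toFun d := (D.partner d.1, d.2 ^^ D.sign d.1)
  invFun d := (D.partner d.1, d.2 ^^ !D.sign d.1)
  left_inv := fun ⟨t, b⟩ => by simp [D.partner_partner t, D.sign_partner]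
  right_inv := fun ⟨t, b⟩ => by simp [D.partner_partner t, D.sign_partner]

/-- The permutation of the half-edges whose cycles are the boundaries of the faces. -/
def face : Perm (α × Bool) := D.vertex * D.edge

theorem edge_apply_next_false (t : α) : D.edge (D.next t, false) = (t, true) := by
  simp [edge]

theorem vertex_apply (t : α) (b : Bool) : D.vertex (t, b) = (D.partner t, b ^^ D.sign t) := rfl

theorem face_apply_true (t : α) : D.face (t, true) = D.vertex (D.next t, false) := rfl

theorem face_apply_next_false (t : α) : D.face (D.next t, false) = D.vertex (t, true) := by
  rw [face, mul_apply, edge_apply_next_false]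

theorem vertex_vertex (t : α) (b : Bool) : D.vertex (D.vertex (t, b)) = (t, !b) := by
  simp [vertex_apply, D.partner_partner t, D.sign_partner]

theorem minimalPeriod_edge (d : α × Bool) : minimalPeriod D.edge d = 2 := by
  obtain ⟨t, _ | _⟩ := d <;>
    exact minimalPeriod_eq_prime (by simp [IsPeriodicPt, IsFixedPt, edge])
      (by simp [IsFixedPt, edge])

theorem minimalPeriod_vertex (d : α × Bool) : minimalPeriod D.vertex d = 4 := by
  obtain ⟨t, b⟩ := d
  refine minimalPeriod_eq_prime_pow (p := 2) (k := 1) ?_ ?_ <;>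
    simp [IsPeriodicPt, IsFixedPt, vertex_vertex]

theorem vertex_sq_mul_edge_apply_true (t : α) :
    (D.vertex ^ 2 * D.edge : Perm (α × Bool)) (t, true) = (D.next t, true) := by
  simp [sq, edge, vertex_vertex]

theorem vertex_sq_mul_edge_apply_false (t : α) :
    (D.vertex ^ 2 * D.edge : Perm (α × Bool)) (t, false) = (D.next⁻¹ t, false) := by
  simp [sq, edge, vertex_vertex]

theorem minimalPeriod_vertex_sq_mul_edge [Fintype α] (h : D.next.IsCycleOn Set.univ)
    (d : α × Bool) :
    minimalPeriod (D.vertex ^ 2 * D.edge : Perm (α × Bool)) d = Fintype.card α := by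
  rw [← Finset.coe_univ] at h
  obtain ⟨t, _ | _⟩ := d
  · rw [minimalPeriod_eq_of_semiconj_of_injective (ι := (·, false))
      (fun s => (D.vertex_sq_mul_edge_apply_false s).symm) (Prod.mk_left_injective _)]
    exact minimalPeriod_eq_card_of_isCycleOn h.inv (Finset.mem_univ t)
  · rw [minimalPeriod_eq_of_semiconj_of_injective (ι := (·, true))
      (fun s => (D.vertex_sq_mul_edge_apply_true s).symm) (Prod.mk_left_injective _)]
    exact minimalPeriod_eq_card_of_isCycleOn h (Finset.mem_univ t)

section CycleType

variable [Fintype α] [DecidableEq α]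

theorem cycleType_edge : D.edge.cycleType = Multiset.replicate (Fintype.card α) 2 := by
  rw [cycleType_eq_replicate_of_minimalPeriod_eq one_lt_two D.minimalPeriod_edge, Fintype.card_prod,
    Fintype.card_bool, Nat.mul_div_cancel _ two_pos]

theorem cycleType_vertex : D.vertex.cycleType = Multiset.replicate (Fintype.card α / 2) 4 := by
  rw [cycleType_eq_replicate_of_minimalPeriod_eq (by norm_num) D.minimalPeriod_vertex,
    Fintype.card_prod, Fintype.card_bool,
    show Fintype.card α * 2 / 4 = Fintype.card α / 2 by omega]

theorem cycleType_vertex_sq_mul_edge [Nontrivial α] (h : D.next.IsCycleOn Set.univ) :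
    (D.vertex ^ 2 * D.edge : Perm (α × Bool)).cycleType = {Fintype.card α, Fintype.card α} := by
  rw [cycleType_eq_replicate_of_minimalPeriod_eq Fintype.one_lt_card
    (D.minimalPeriod_vertex_sq_mul_edge h), Fintype.card_prod, Fintype.card_bool,
    Nat.mul_div_cancel_left _ Fintype.card_pos]
  rfl

end CycleType

/-- The signed Gauss code of genus two with word `abacbc`, whose complement is a single face. -/
def genusTwo : SignedGaussCode (Fin 6) where
  next := finRotate 6
  partner := ![2, 4, 0, 5, 1, 3]
  sign := ![true, false, false, false, true, true]
  partner_partner := by unfold Involutive; decide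
  sign_partner := by decide

theorem isCycleOn_next_genusTwo : genusTwo.next.IsCycleOn Set.univ :=
  isCycleOn_univ_of_forall_sameCycle (x := 0) (by decide)

theorem isCycleOn_face_genusTwo : genusTwo.face.IsCycleOn Set.univ :=
  isCycleOn_univ_of_forall_sameCycle (x := (0, true)) (by decide)

section AddHandle

variable [DecidableEq α] (a : α)

/-- The code obtained by inserting the word `abab`, with two negative and then two positive signs,
between the passages `a` and `next a`; geometrically, a connected sum with a torus along an edge. -/
def addHandle : SignedGaussCode (α ⊕ Fin 4) where
  next := Equiv.sumCongr D.next (finRotate 4) * swap (Sum.inl a) (Sum.inr 3)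
  partner := Sum.map D.partner (· + 2)
  sign := Sum.elim D.sign (2 ≤ ·)
  partner_partner := by
    rintro (t | i)
    · simp [D.partner_partner t]
    · exact congrArg Sum.inr (by decide +revert : i + 2 + 2 = i)
  sign_partner := by
    rintro (t | i)
    · exact D.sign_partner t
    · change decide (2 ≤ i + 2) = !decide (2 ≤ i)
      decide +revert

theorem addHandle_next_inl_of_ne {t : α} (h : t ≠ a) :
    (D.addHandle a).next (Sum.inl t) = Sum.inl (D.next t) := by
  simp [addHandle, swap_apply_of_ne_of_ne, h]

theorem addHandle_next_inl_self : (D.addHandle a).next (Sum.inl a) = Sum.inr 0 := by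
  simp [addHandle]

theorem addHandle_next_inr {i : Fin 4} (h : i ≠ 3) :
    (D.addHandle a).next (Sum.inr i) = Sum.inr (i + 1) := by
  simp [addHandle, swap_apply_of_ne_of_ne, h]

theorem addHandle_next_inr_three : (D.addHandle a).next (Sum.inr 3) = Sum.inl (D.next a) := by
  simp [addHandle]

theorem isChain_next_addHandle :
    List.IsChain ((D.addHandle a).next · = ·)
      [Sum.inl a, Sum.inr 0, Sum.inr 1, Sum.inr 2, Sum.inr 3, Sum.inl (D.next a)] :=
  .cons_cons (D.addHandle_next_inl_self a) <|
    .cons_cons (D.addHandle_next_inr a (i := 0) (by decide)) <|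
    .cons_cons (D.addHandle_next_inr a (i := 1) (by decide)) <|
    .cons_cons (D.addHandle_next_inr a (i := 2) (by decide)) <|
    .cons_cons (D.addHandle_next_inr_three a) <| .singleton _

theorem addHandle_vertex_inr (i : Fin 4) (b : Bool) :
    (D.addHandle a).vertex (Sum.inr i, b) = (Sum.inr (i + 2), b ^^ decide (2 ≤ i)) := rfl

theorem addHandle_face_inl_true_of_ne {t : α} (h : t ≠ a) :
    (D.addHandle a).face (Sum.inl t, true) = Prod.map Sum.inl id (D.face (t, true)) := by
  rw [face_apply_true, addHandle_next_inl_of_ne D a h]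
  rfl

theorem addHandle_face_inl_next_false_of_ne {t : α} (h : t ≠ a) :
    (D.addHandle a).face (Sum.inl (D.next t), false) =
      Prod.map Sum.inl id (D.face (D.next t, false)) := by
  rw [← addHandle_next_inl_of_ne D a h, face_apply_next_false, face_apply_next_false]
  rfl

theorem addHandle_face_inr_true {i : Fin 4} (h : i ≠ 3) :
    (D.addHandle a).face (Sum.inr i, true) = (Sum.inr (i + 3), decide (2 ≤ i + 1)) := by
  rw [face_apply_true, addHandle_next_inr D a h, addHandle_vertex_inr, Bool.false_xor, add_assoc]
  rfl

theorem addHandle_face_inr_false {i : Fin 4} (h : i ≠ 3) :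
    (D.addHandle a).face (Sum.inr (i + 1), false) = (Sum.inr (i + 2), !decide (2 ≤ i)) := by
  rw [← addHandle_next_inr D a h, face_apply_next_false, addHandle_vertex_inr, Bool.true_xor]

theorem isChain_face_addHandle_true :
    List.IsChain ((D.addHandle a).face · = ·)
      [(Sum.inl a, true), (Sum.inr 2, false), (Sum.inr 3, true),
        Prod.map Sum.inl id (D.face (a, true))] := by
  have hfirst : (D.addHandle a).face (Sum.inl a, true) = (Sum.inr 2, false) := by
    rw [face_apply_true, D.addHandle_next_inl_self a]
    rfl
  have hlast : (D.addHandle a).face (Sum.inr 3, true) = Prod.map Sum.inl id (D.face (a, true)) := by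
    rw [face_apply_true, D.addHandle_next_inr_three a]
    rfl
  exact .cons_cons hfirst <|
    .cons_cons (D.addHandle_face_inr_false a (i := 1) (by decide)) <|
    .cons_cons hlast <| .singleton _

theorem isChain_face_addHandle_next_false :
    List.IsChain ((D.addHandle a).face · = ·)
      [(Sum.inl (D.next a), false), (Sum.inr 1, false), (Sum.inr 2, true), (Sum.inr 1, true),
        (Sum.inr 0, true), (Sum.inr 3, false), (Sum.inr 0, false),
        Prod.map Sum.inl id (D.face (D.next a, false))] := by
  have hfirst : (D.addHandle a).face (Sum.inl (D.next a), false) = (Sum.inr 1, false) := by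
    rw [← D.addHandle_next_inr_three a, face_apply_next_false]
    rfl
  have hlast : (D.addHandle a).face (Sum.inr 0, false) =
      Prod.map Sum.inl id (D.face (D.next a, false)) := by
    rw [← D.addHandle_next_inl_self a, face_apply_next_false, face_apply_next_false]
    rfl
  exact .cons_cons hfirst <|
    .cons_cons (D.addHandle_face_inr_false a (i := 0) (by decide)) <|
    .cons_cons (D.addHandle_face_inr_true a (i := 2) (by decide)) <|
    .cons_cons (D.addHandle_face_inr_true a (i := 1) (by decide)) <|
    .cons_cons (D.addHandle_face_inr_true a (i := 0) (by decide)) <|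
    .cons_cons (D.addHandle_face_inr_false a (i := 2) (by decide)) <|
    .cons_cons hlast <| .singleton _

theorem isCycleOn_next_addHandle (h : D.next.IsCycleOn Set.univ) :
    (D.addHandle a).next.IsCycleOn Set.univ := by
  have hchain := sameCycle_of_isChain (D.isChain_next_addHandle a)
  refine isCycleOn_univ_of_forall_exists_sameCycle (ι := Sum.inl) h (fun t => ?_) ?_
  · obtain rfl | hta := eq_or_ne t a
    · exact hchain _ (by simp)
    · rw [← addHandle_next_inl_of_ne D a hta]
      exact sameCycle_apply_right.2 SameCycle.rfl
  · rintro (t | i)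
    · exact ⟨t, SameCycle.rfl⟩
    · exact ⟨a, hchain _ (by fin_cases i <;> simp)⟩

theorem isCycleOn_face_addHandle (h : D.face.IsCycleOn Set.univ) :
    (D.addHandle a).face.IsCycleOn Set.univ := by
  have hout := sameCycle_of_isChain (D.isChain_face_addHandle_true a)
  have hin := sameCycle_of_isChain (D.isChain_face_addHandle_next_false a)
  refine isCycleOn_univ_of_forall_exists_sameCycle (ι := Prod.map Sum.inl id) h ?_ ?_
  · rintro ⟨t, _ | _⟩
    · obtain ⟨t, rfl⟩ := D.next.surjective t
      obtain rfl | hta := eq_or_ne t a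
      · exact hin _ (by simp)
      · rw [← addHandle_face_inl_next_false_of_ne D a hta]
        exact sameCycle_apply_right.2 SameCycle.rfl
    · obtain rfl | hta := eq_or_ne t a
      · exact hout _ (by simp)
      · rw [← addHandle_face_inl_true_of_ne D a hta]
        exact sameCycle_apply_right.2 SameCycle.rfl
  · rintro ⟨t | i, b⟩
    · exact ⟨(t, b), SameCycle.rfl⟩
    · by_cases hi : (i, b) ∈ [(2, false), (3, true)]
      · exact ⟨(a, true), hout _ (by fin_cases i <;> cases b <;> simp_all)⟩
      · exact ⟨(D.next a, false), hin _ (by fin_cases i <;> cases b <;> simp_all)⟩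

end AddHandle

theorem exists_isCycleOn_next_and_face {g : ℕ} (hg : 2 ≤ g) :
    ∃ (α : Type) (_ : Fintype α) (_ : DecidableEq α) (D : SignedGaussCode α),
      Fintype.card α = 4 * g - 2 ∧ D.next.IsCycleOn Set.univ ∧ D.face.IsCycleOn Set.univ := by
  induction g, hg using Nat.le_induction with
  | base =>
    exact ⟨Fin 6, inferInstance, inferInstance, genusTwo, rfl, isCycleOn_next_genusTwo,
      isCycleOn_face_genusTwo⟩
  | succ g hg ih =>
    obtain ⟨α, _, _, D, hcard, hnext, hface⟩ := ih
    obtain ⟨a⟩ : Nonempty α := Fintype.card_pos_iff.1 (by omega)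
    refine ⟨α ⊕ Fin 4, inferInstance, inferInstance, D.addHandle a, ?_,
      D.isCycleOn_next_addHandle a hnext, D.isCycleOn_face_addHandle a hface⟩
    rw [Fintype.card_sum, hcard, Fintype.card_fin]
    omega

end SignedGaussCode

/-- For every genus g ≥ 2 there is a monodromy pair on 8g − 4 points
consisting of 4g − 2 transpositions and 2g − 1 four-cycles whose product
σ₁σ₀ is a single (8g − 4)-cycle (so the pair is transitive) and such that
σ₁²σ₀ splits as two disjoint cycles of equal length 4g − 2:
the monodromy of a uniform filling curve in general position with one face. -/
theorem exists_uniform_filling_curve_one_face (g : ℕ) (hg : 2 ≤ g) :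
    ∃ σ₀ σ₁ : Equiv.Perm (Fin (8 * g - 4)),
      σ₀.cycleType = Multiset.replicate (4 * g - 2) 2 ∧
      σ₁.cycleType = Multiset.replicate (2 * g - 1) 4 ∧
      (σ₁ * σ₀).cycleType = {8 * g - 4} ∧
      (∀ x y : Fin (8 * g - 4),
        ∃ π ∈ Subgroup.closure ({σ₀, σ₁} : Set (Equiv.Perm (Fin (8 * g - 4)))),
          π x = y) ∧
      (σ₁ ^ 2 * σ₀).cycleType = {4 * g - 2, 4 * g - 2} := by
  obtain ⟨α, _, _, D, hcard, hnext, hface⟩ := SignedGaussCode.exists_isCycleOn_next_and_face hg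
  have : Nontrivial α := Fintype.one_lt_card_iff_nontrivial.1 (by omega)
  have hdarts : Fintype.card (α × Bool) = 8 * g - 4 := by
    rw [Fintype.card_prod, hcard, Fintype.card_bool]
    omega
  let e : α × Bool ≃ Fin (8 * g - 4) := Fintype.equivFinOfCardEq hdarts
  have hface' : (e.permCongr D.vertex * e.permCongr D.edge).IsCycleOn Set.univ := by
    rw [← Equiv.permCongr_mul]
    exact isCycleOn_univ_permCongr hface e
  refine ⟨e.permCongr D.edge, e.permCongr D.vertex, ?_, ?_, ?_,
    exists_mem_closure_pair_apply_eq hface', ?_⟩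
  · rw [cycleType_permCongr, D.cycleType_edge, hcard]
  · rw [cycleType_permCongr, D.cycleType_vertex, hcard, show (4 * g - 2) / 2 = 2 * g - 1 by omega]
  · have : Nontrivial (Fin (8 * g - 4)) := e.symm.nontrivial
    rw [cycleType_eq_singleton_of_isCycleOn_univ hface', Fintype.card_fin]
  · rw [sq, ← Equiv.permCongr_mul, ← Equiv.permCongr_mul, ← sq, cycleType_permCongr,
      D.cycleType_vertex_sq_mul_edge hnext, hcard]
end

section
/- For every natural number g ≥ 2 there exist permutations σ₀, σ₁ of Fin (8g) such that: the cycle type of σ₀ consists of 4g copies of 2 (a product of 4g disjoint transpositions covering all points); the cycle type of σ₁ consists of 2g copies of 4; the cycle type of σ₁σ₀ is the multiset {4g, 4g} (two disjoint cycles of equal length 4g); the subgroup generated by σ₀ and σ₁ acts transitively on Fin (8g); and the cycle type of σ₁²σ₀ is the multiset {4g, 4g}. (This is the combinatorial content of the existence, for every genus g ≥ 2, of a uniform filling curve in general position whose complement has exactly two faces, whose length function is minimized on a surface uniformized by a surface subgroup of Δ(2,4,4g).) -/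
/-!
Resolve the crossings of a curve into `N` passages, each of which can be run through in two
directions: `inl i` is the `i`-th passage run forwards and `inr i` the same passage run backwards.
Following the curve is the permutation `C = ρ ⊕ ρ⁻¹` of these `2N` directed passages, where `ρ` is
an `N`-cycle, and reversing the direction is the exchange `F` of the summands, so that `F C` is an
involution. If a permutation `φ` satisfies `⁅C, φ⁆ ^ 2 = F`, put `σ₁ = ⁅C, φ⁆` and `σ₀ = F C`. Then
`σ₁² σ₀ = C` and `σ₁ σ₀ = σ₁⁻¹ C = φ C φ⁻¹`, so the curve and the faces have the same cycle type
`{N, N}`.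

Such a `φ` for `N = 4g` is assembled from copies of one with `N = 8` and one with `N = 12`. Merging
two cycles `ρ` and `ρ'` by a transposition multiplies `C` by two transpositions, and these drop out
of the commutator as long as `φ` and `φ'` fix the four points they move.
-/

open Equiv hiding sumCongr sumCongr_apply
open Equiv.Perm
open Sum (inl inr)
open scoped commutatorElement

namespace UniformFillingCurve

section CycleType

variable {α β : Type*} [Fintype α] [DecidableEq α] [Fintype β] [DecidableEq β]

theorem cycleType_permCongrHom (e : α ≃ β) (σ : Perm α) :
    (e.permCongrHom σ).cycleType = σ.cycleType := by
  let f : α ≃ Subtype fun _ : β => True := e.trans (Equiv.Set.univ β).symm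
  have h : e.permCongrHom σ = σ.extendDomain f := by
    ext y
    rw [extendDomain_apply_subtype _ _ trivial]
    rfl
  rw [h, cycleType_extendDomain]

theorem cycleType_sumCongr (σ : Perm α) (τ : Perm β) :
    (sumCongr σ τ).cycleType = σ.cycleType + τ.cycleType := by
  have h_left : sumCongr σ (1 : Perm β) = σ.extendDomain (ofInjective inl Sum.inl_injective) := by
    ext (a | b)
    · exact (extendDomain_apply_image σ (ofInjective inl Sum.inl_injective) a).symm
    · exact (extendDomain_apply_not_subtype _ _ (by simp)).symm
  have h_right : sumCongr (1 : Perm α) τ = τ.extendDomain (ofInjective inr Sum.inr_injective) := by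
    ext (a | b)
    · exact (extendDomain_apply_not_subtype _ _ (by simp)).symm
    · exact (extendDomain_apply_image τ (ofInjective inr Sum.inr_injective) b).symm
  have h_disjoint : Perm.Disjoint (sumCongr σ (1 : Perm β)) (sumCongr (1 : Perm α) τ) := by
    rintro (a | b)
    · exact Or.inr rfl
    · exact Or.inl rfl
  rw [← mul_one σ, ← one_mul τ, ← sumCongr_mul, h_disjoint.cycleType_mul, h_left, h_right,
    cycleType_extendDomain, cycleType_extendDomain, mul_one, one_mul]

theorem cycleType_eq_singleton_card [Nontrivial α] {σ : Perm α} (hσ : ∀ x y, σ.SameCycle x y) :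
    σ.cycleType = {Fintype.card α} := by
  have h_on : σ.IsCycleOn Set.univ := ⟨σ.bijective.bijOn_univ, fun x _ y _ => hσ x y⟩
  have h_ne (x : α) : σ x ≠ x := h_on.apply_ne Set.nontrivial_univ (Set.mem_univ x)
  have h_cycle : σ.IsCycle := by
    obtain ⟨x⟩ := ‹Nontrivial α›.to_nonempty
    exact ⟨x, h_ne x, fun y _ => hσ x y⟩
  have h_support : σ.support = Finset.univ := by
    ext x
    simp [h_ne x]
  rw [h_cycle.cycleType, h_support, Finset.card_univ]

theorem exists_pow_apply_eq_self_of_mem_cycleType {σ : Perm α} {n : ℕ} (hn : n ∈ σ.cycleType) :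
    ∃ x, (σ ^ n) x = x := by
  obtain ⟨c, τ, rfl, h_disjoint, h_cycle, rfl⟩ := mem_cycleType_iff.1 hn
  obtain ⟨x, hx⟩ := h_cycle.nonempty_support
  have hτ : τ x = x := (h_disjoint x).resolve_left (mem_support.1 hx)
  refine ⟨x, ?_⟩
  rw [h_disjoint.commute.mul_pow, ← h_cycle.orderOf, pow_orderOf_eq_one, one_mul,
    pow_apply_eq_self_of_apply_eq_self hτ]

theorem cycleType_eq_replicate_of_pow_prime_pow {p k : ℕ} [Fact p.Prime] {σ : Perm α}
    (hσ : σ ^ p ^ (k + 1) = 1) (hfix : ∀ x, (σ ^ p ^ k) x ≠ x) :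
    σ.cycleType = Multiset.replicate (Fintype.card α / p ^ (k + 1)) (p ^ (k + 1)) := by
  have h_mem : ∀ n ∈ σ.cycleType, n = p ^ (k + 1) := by
    intro n hn
    have h_dvd : n ∣ p ^ (k + 1) :=
      (dvd_of_mem_cycleType hn).trans (orderOf_dvd_of_pow_eq_one hσ)
    obtain ⟨j, hj, rfl⟩ := (Nat.dvd_prime_pow Fact.out).1 h_dvd
    obtain ⟨x, hx⟩ := exists_pow_apply_eq_self_of_mem_cycleType hn
    by_contra h_ne
    have hjk : j ≤ k := by
      by_contra!
      exact h_ne (congrArg (p ^ ·) (by omega))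
    obtain ⟨c, hc⟩ := pow_dvd_pow p hjk
    exact hfix x (by rw [hc, pow_mul, pow_apply_eq_self_of_apply_eq_self hx])
  have h_support : σ.support = Finset.univ := by
    ext x
    simpa using fun hx => hfix x (pow_apply_eq_self_of_apply_eq_self hx _)
  have h_replicate := Multiset.eq_replicate_card.2 h_mem
  have h_sum := σ.sum_cycleType
  rw [h_support, Finset.card_univ, h_replicate, Multiset.sum_replicate, smul_eq_mul] at h_sum
  rw [h_replicate, ← h_sum, Nat.mul_div_cancel _ (pow_pos (Fact.out : p.Prime).pos _)]

end CycleType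

section SameCycle

variable {α β : Type*}

theorem sumCongr_zpow (σ : Perm α) (τ : Perm β) (n : ℤ) :
    sumCongr σ τ ^ n = sumCongr (σ ^ n) (τ ^ n) :=
  (map_zpow (sumCongrHom α β) (σ, τ) n).symm

theorem sameCycle_sumCongr_inl_inl {σ : Perm α} {τ : Perm β} {a a' : α} :
    (sumCongr σ τ).SameCycle (inl a) (inl a') ↔ σ.SameCycle a a' := by
  simp only [SameCycle, sumCongr_zpow, sumCongr_apply, Sum.map_inl, Sum.inl.injEq]

theorem sameCycle_sumCongr_inr_inr {σ : Perm α} {τ : Perm β} {b b' : β} :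
    (sumCongr σ τ).SameCycle (inr b) (inr b') ↔ τ.SameCycle b b' := by
  simp only [SameCycle, sumCongr_zpow, sumCongr_apply, Sum.map_inr, Sum.inr.injEq]

theorem not_sameCycle_sumCongr_inl_inr {σ : Perm α} {τ : Perm β} {a : α} {b : β} :
    ¬ (sumCongr σ τ).SameCycle (inl a) (inr b) := by
  simp [SameCycle, sumCongr_zpow]

theorem sameCycle_finRotate {n : ℕ} (i j : Fin (n + 2)) : (finRotate (n + 2)).SameCycle i j :=
  isCycle_finRotate.sameCycle (mem_support.1 (by simp)) (mem_support.1 (by simp))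

variable [DecidableEq α]

theorem sameCycle_mul_swap [Finite α] {f : Perm α} {a b x : α} (hab : ¬ f.SameCycle a b)
    (hx : f.SameCycle a x) : (f * swap a b).SameCycle b x := by
  have h_start : (f * swap a b).SameCycle b (f a) := ⟨1, by simp⟩
  obtain ⟨n, rfl⟩ := (sameCycle_apply_left.2 hx).exists_nat_pow_eq
  induction n with
  | zero => exact h_start
  | succ n ih =>
    have hn : f.SameCycle a ((f ^ n) (f a)) := ⟨n + 1, by rw [zpow_add_one]; rfl⟩
    rw [pow_succ', mul_apply]
    by_cases h_return : (f ^ n) (f a) = a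
    · rwa [h_return]
    · have h_ne : (f ^ n) (f a) ≠ b := fun h => hab (h ▸ hn)
      have h_step : (f * swap a b) ((f ^ n) (f a)) = f ((f ^ n) (f a)) := by
        rw [mul_apply, swap_apply_of_ne_of_ne h_return h_ne]
      rw [← h_step, sameCycle_apply_right]
      exact ih hn

theorem sameCycle_sumCongr_mul_swap [DecidableEq β] [Finite α] [Finite β] {σ : Perm α} {τ : Perm β}
    (hσ : ∀ a a', σ.SameCycle a a') (hτ : ∀ b b', τ.SameCycle b b') (a : α) (b : β)
    (x y : α ⊕ β) : (sumCongr σ τ * swap (inl a) (inr b)).SameCycle x y := by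
  have h_left (a' : α) : (sumCongr σ τ * swap (inl a) (inr b)).SameCycle (inr b) (inl a') :=
    sameCycle_mul_swap not_sameCycle_sumCongr_inl_inr (sameCycle_sumCongr_inl_inl.2 (hσ a a'))
  have h_right (b' : β) : (sumCongr σ τ * swap (inl a) (inr b)).SameCycle (inl a) (inr b') := by
    rw [swap_comm]
    exact sameCycle_mul_swap (fun h => not_sameCycle_sumCongr_inl_inr h.symm)
      (sameCycle_sumCongr_inr_inr.2 (hτ b b'))
  have h_all : ∀ z, (sumCongr σ τ * swap (inl a) (inr b)).SameCycle (inl a) z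
    | inl a' => (h_right b).trans (h_left a')
    | inr b' => h_right b'
  exact (h_all x).symm.trans (h_all y)

end SameCycle

section Commutator

theorem commutatorElement_mul_left_of_commute {G : Type*} [Group G] {c t φ : G}
    (h : Commute t φ) : ⁅c * t, φ⁆ = ⁅c, φ⁆ := by
  calc ⁅c * t, φ⁆ = c * (t * φ * t⁻¹) * c⁻¹ * φ⁻¹ := by rw [commutatorElement_def]; group
    _ = ⁅c, φ⁆ := by rw [h.eq, mul_inv_cancel_right, commutatorElement_def]

theorem commute_swap_of_apply_eq_self {α : Type*} [DecidableEq α] {φ : Perm α} {x y : α}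
    (hx : φ x = x) (hy : φ y = y) : Commute (swap x y) φ := by
  have h := mul_swap_eq_swap_mul φ x y
  rw [hx, hy] at h
  exact h.symm

end Commutator

theorem exists_mem_closure_permCongrHom_apply_eq {α β : Type*} (e : α ≃ β) {S : Set (Perm α)}
    [MulAction.IsPretransitive (Subgroup.closure S) α] (x y : β) :
    ∃ π ∈ Subgroup.closure (e.permCongrHom '' S), π x = y := by
  obtain ⟨⟨π, hπ⟩, h_apply⟩ :=
    MulAction.exists_smul_eq (Subgroup.closure S) (e.symm x) (e.symm y)
  refine ⟨e.permCongrHom π, ?_, ?_⟩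
  · have h_map := Subgroup.mem_map_of_mem e.permCongrHom.toMonoidHom hπ
    rwa [MonoidHom.map_closure] at h_map
  · exact e.eq_symm_apply.1 h_apply

section Passages

variable {ι κ : Type*}

/-- The successor permutation of a curve on its directed passages `ι ⊕ ι`, where `ρ` is the
successor for one of its two directions. The summand `inl` consists of the passages in that
direction, `inr` of those in the opposite one. -/
def traversal (ρ : Perm ι) : Perm (ι ⊕ ι) := sumCongr ρ ρ⁻¹

/-- The permutation of the directed passages reversing the direction of each. -/
def reversal (ι : Type*) : Perm (ι ⊕ ι) := Equiv.sumComm ι ι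

/-- A pair of permutations of the directed passages `ι ⊕ ι` and `κ ⊕ κ`, acting side by side on
the directed passages of the disjoint union `ι ⊕ κ`. -/
def juxtapose (ι κ : Type*) : Perm (ι ⊕ ι) × Perm (κ ⊕ κ) →* Perm ((ι ⊕ κ) ⊕ (ι ⊕ κ)) :=
  (Equiv.sumSumSumComm ι ι κ κ).permCongrHom.toMonoidHom.comp (sumCongrHom (ι ⊕ ι) (κ ⊕ κ))

theorem juxtapose_traversal (ρ : Perm ι) (ρ' : Perm κ) :
    juxtapose ι κ (traversal ρ, traversal ρ') = traversal (sumCongr ρ ρ') := by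
  ext ((i | j) | (i | j)) <;> rfl

theorem juxtapose_reversal : juxtapose ι κ (reversal ι, reversal κ) = reversal (ι ⊕ κ) := by
  ext ((i | j) | (i | j)) <;> rfl

theorem reversal_sq : reversal ι ^ 2 = 1 := by
  ext (i | i) <;> rfl

theorem reversal_apply_ne (x : ι ⊕ ι) : reversal ι x ≠ x := by
  rcases x with i | i <;> simp [reversal]

theorem reversal_mul_traversal_sq (ρ : Perm ι) : (reversal ι * traversal ρ) ^ 2 = 1 := by
  ext (i | i) <;> simp [pow_two, reversal, traversal]

theorem reversal_mul_traversal_apply_ne (ρ : Perm ι) (x : ι ⊕ ι) :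
    (reversal ι * traversal ρ) x ≠ x := by
  rcases x with i | i <;> simp [reversal, traversal]

theorem traversal_mul_swap [DecidableEq ι] (ρ : Perm ι) (i j : ι) :
    traversal (ρ * swap i j) =
      traversal ρ * (swap (inl i) (inl j) * swap (inr (ρ i)) (inr (ρ j))) := by
  have h_inv : (ρ * swap i j)⁻¹ = ρ⁻¹ * swap (ρ i) (ρ j) := by
    rw [mul_swap_eq_swap_mul, mul_inv_rev, swap_inv]
  rw [traversal, h_inv, ← sumCongr_swap_one, ← sumCongr_one_swap, traversal, sumCongr_mul,
    sumCongr_mul, one_mul, mul_one]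

theorem cycleType_traversal [Fintype ι] [DecidableEq ι] [Nontrivial ι] {ρ : Perm ι}
    (hρ : ∀ i j, ρ.SameCycle i j) :
    (traversal ρ).cycleType = {Fintype.card ι, Fintype.card ι} := by
  rw [traversal, cycleType_sumCongr, cycleType_inv, cycleType_eq_singleton_card hρ]
  rfl

theorem isPretransitive_of_traversal_mem_of_reversal_mem {ρ : Perm ι}
    (hρ : ∀ i j, ρ.SameCycle i j) {H : Subgroup (Perm (ι ⊕ ι))} (h_traversal : traversal ρ ∈ H)
    (h_reversal : reversal ι ∈ H) : MulAction.IsPretransitive H (ι ⊕ ι) := by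
  have h_inl (i j : ι) : ∃ π : H, π • (inl i : ι ⊕ ι) = inl j := by
    obtain ⟨n, hn⟩ := hρ i j
    refine ⟨⟨traversal ρ ^ n, zpow_mem h_traversal n⟩, ?_⟩
    rw [Subgroup.mk_smul, traversal, sumCongr_zpow, Perm.smul_def, sumCongr_apply, Sum.map_inl, hn]
  have h_to_inl : ∀ x : ι ⊕ ι, ∃ (i : ι) (π : H), π • (inl i : ι ⊕ ι) = x
    | inl i => ⟨i, 1, one_smul _ _⟩
    | inr i => ⟨i, ⟨reversal ι, h_reversal⟩, rfl⟩
  refine ⟨fun x y => ?_⟩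
  obtain ⟨i, π, rfl⟩ := h_to_inl x
  obtain ⟨j, π', rfl⟩ := h_to_inl y
  obtain ⟨ω, hω⟩ := h_inl i j
  exact ⟨π' * ω * π⁻¹, by rw [mul_smul, mul_smul, inv_smul_smul, hω]⟩

end Passages

/-- A closed curve with two faces, in a form suitable for connected sums. The passages of the curve
through its crossings are `ι`, in the cyclic order `rot`. The permutation `twist` carries the
directed curve to the boundaries of the faces, and the commutator of the two is the rotation by a
quarter turn about the crossings. The curve can be cut open between `port` and `rot port`: the two
directed passages at the cut whose successors change are fixed by `twist`. -/
structure TwoFaceBlock (ι : Type*) where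
  rot : Perm ι
  sameCycle_rot : ∀ i j, rot.SameCycle i j
  twist : Perm (ι ⊕ ι)
  commutator_sq : ⁅traversal rot, twist⁆ ^ 2 = reversal ι
  port : ι
  twist_inl_port : twist (inl port) = inl port
  twist_inr_rot_port : twist (inr (rot port)) = inr (rot port)

namespace TwoFaceBlock

theorem commutator_juxtapose {ι κ : Type*} [DecidableEq ι] [DecidableEq κ] (A : TwoFaceBlock ι)
    (B : TwoFaceBlock κ) :
    ⁅traversal (sumCongr A.rot B.rot * swap (inl A.port) (inr B.port)),
        juxtapose ι κ (A.twist, B.twist)⁆ =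
      juxtapose ι κ (⁅traversal A.rot, A.twist⁆, ⁅traversal B.rot, B.twist⁆) := by
  have h_commute : Commute
      (swap (inl (inl A.port)) (inl (inr B.port)) *
        swap (inr (inl (A.rot A.port))) (inr (inr (B.rot B.port))))
      (juxtapose ι κ (A.twist, B.twist)) := by
    refine (commute_swap_of_apply_eq_self ?_ ?_).mul_left (commute_swap_of_apply_eq_self ?_ ?_)
    all_goals simp [juxtapose, twist_inl_port, twist_inr_rot_port]
  rw [traversal_mul_swap, Perm.sumCongr_apply, Perm.sumCongr_apply, Sum.map_inl, Sum.map_inr,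
    commutatorElement_mul_left_of_commute h_commute, ← juxtapose_traversal, ← map_commutatorElement]
  rfl

/-- The connected sum of two blocks: both curves are cut open at their ports and joined to a single
closed curve. Its port is that of the second block, so that further blocks can be attached. -/
def glue {ι κ : Type*} [DecidableEq ι] [DecidableEq κ] [Finite ι] [Finite κ] (A : TwoFaceBlock ι)
    (B : TwoFaceBlock κ) : TwoFaceBlock (ι ⊕ κ) where
  rot := sumCongr A.rot B.rot * swap (inl A.port) (inr B.port)
  sameCycle_rot := sameCycle_sumCongr_mul_swap A.sameCycle_rot B.sameCycle_rot A.port B.port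
  twist := juxtapose ι κ (A.twist, B.twist)
  commutator_sq := by
    rw [commutator_juxtapose, ← map_pow, Prod.pow_mk, A.commutator_sq, B.commutator_sq,
      juxtapose_reversal]
  port := inr B.port
  twist_inl_port := by simp [juxtapose, twist_inl_port]
  twist_inr_rot_port := by simp [juxtapose, twist_inr_rot_port]

/-- A block with four crossings on a surface of genus two. Its Gauss word is `abcdcdab`. The twist,
given by its cycles, was found by a search. -/
def genusTwo : TwoFaceBlock (Fin 8) where
  rot := finRotate 8
  sameCycle_rot := sameCycle_finRotate
  twist := [inl 0, inl 6].formPerm * [inl 1, inr 1, inl 5, inr 7].formPerm *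
    [inl 2, inr 6, inl 4, inr 2].formPerm * [inr 5, inr 3].formPerm
  commutator_sq := by decide +kernel
  port := 7
  twist_inl_port := by decide +kernel
  twist_inr_rot_port := by decide +kernel

/-- A block with six crossings on a surface of genus three. Its Gauss word is `abcdeafdbecf`. The
twist, given by its cycles, was found by a search. -/
def genusThree : TwoFaceBlock (Fin 12) where
  rot := finRotate 12
  sameCycle_rot := sameCycle_finRotate
  twist := [inl 0, inr 5, inr 2, inl 10, inl 5].formPerm *
    [inl 1, inr 9, inl 9, inr 1, inr 6, inr 11, inl 6, inl 8, inl 7, inr 4, inr 8, inl 2].formPerm *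
    [inl 3, inr 10].formPerm
  commutator_sq := by decide +kernel
  port := 11
  twist_inl_port := by decide +kernel
  twist_inr_rot_port := by decide +kernel

theorem exists_card_eq : ∀ g : ℕ, 2 ≤ g → ∃ (ι : Type) (_ : Fintype ι) (_ : DecidableEq ι),
    Fintype.card ι = 4 * g ∧ Nonempty (TwoFaceBlock ι)
  | 0, h | 1, h => by omega
  | 2, _ => ⟨Fin 8, inferInstance, inferInstance, rfl, ⟨genusTwo⟩⟩
  | 3, _ => ⟨Fin 12, inferInstance, inferInstance, rfl, ⟨genusThree⟩⟩
  | g + 4, _ => by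
    obtain ⟨ι, _, _, h_card, ⟨B⟩⟩ := exists_card_eq (g + 2) (by omega)
    refine ⟨ι ⊕ Fin 8, inferInstance, inferInstance, ?_, ⟨B.glue genusTwo⟩⟩
    rw [Fintype.card_sum, h_card, Fintype.card_fin]
    ring

section Monodromy

variable {ι : Type*} (B : TwoFaceBlock ι)

/-- The permutation `σ₁`, which turns by a quarter about each crossing. -/
def vertexPerm : Perm (ι ⊕ ι) := ⁅traversal B.rot, B.twist⁆

/-- The permutation `σ₀`, which exchanges the two ends of each edge. -/
def edgePerm : Perm (ι ⊕ ι) := reversal ι * traversal B.rot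

theorem vertexPerm_sq : B.vertexPerm ^ 2 = reversal ι := B.commutator_sq

theorem vertexPerm_sq_mul_edgePerm : B.vertexPerm ^ 2 * B.edgePerm = traversal B.rot := by
  rw [vertexPerm_sq, edgePerm, ← mul_assoc, ← pow_two, reversal_sq, one_mul]

theorem vertexPerm_mul_edgePerm :
    B.vertexPerm * B.edgePerm = B.twist * traversal B.rot * B.twist⁻¹ := by
  calc B.vertexPerm * B.edgePerm = B.vertexPerm⁻¹ * (B.vertexPerm ^ 2 * B.edgePerm) := by group
    _ = B.vertexPerm⁻¹ * traversal B.rot := by rw [vertexPerm_sq_mul_edgePerm]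
    _ = B.twist * traversal B.rot * B.twist⁻¹ := by
      rw [vertexPerm, commutatorElement_inv, commutatorElement_def, inv_mul_cancel_right]

theorem isPretransitive_closure :
    MulAction.IsPretransitive (Subgroup.closure {B.edgePerm, B.vertexPerm}) (ι ⊕ ι) := by
  have h_edge : B.edgePerm ∈ Subgroup.closure {B.edgePerm, B.vertexPerm} :=
    Subgroup.subset_closure (by simp)
  have h_vertex_sq : B.vertexPerm ^ 2 ∈ Subgroup.closure {B.edgePerm, B.vertexPerm} :=
    pow_mem (Subgroup.subset_closure (by simp)) 2
  refine isPretransitive_of_traversal_mem_of_reversal_mem B.sameCycle_rot ?_ ?_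
  · rw [← vertexPerm_sq_mul_edgePerm]
    exact mul_mem h_vertex_sq h_edge
  · rwa [← vertexPerm_sq]

variable [Fintype ι] [DecidableEq ι]

theorem cycleType_edgePerm : B.edgePerm.cycleType = Multiset.replicate (Fintype.card ι) 2 := by
  have h := cycleType_eq_replicate_of_pow_prime_pow (p := 2) (k := 0) (σ := B.edgePerm)
    (reversal_mul_traversal_sq B.rot) (reversal_mul_traversal_apply_ne B.rot)
  rw [h, Fintype.card_sum]
  congr
  omega

theorem cycleType_vertexPerm :
    B.vertexPerm.cycleType = Multiset.replicate (Fintype.card ι / 2) 4 := by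
  have h_pow_four : B.vertexPerm ^ 2 ^ (1 + 1) = 1 := by
    rw [pow_succ 2, pow_mul, pow_one, vertexPerm_sq, reversal_sq]
  have h_ne (x : ι ⊕ ι) : (B.vertexPerm ^ 2 ^ 1) x ≠ x := by
    rw [pow_one, vertexPerm_sq]
    exact reversal_apply_ne x
  rw [cycleType_eq_replicate_of_pow_prime_pow h_pow_four h_ne, Fintype.card_sum]
  congr 1
  omega

end Monodromy

end TwoFaceBlock

end UniformFillingCurve

open UniformFillingCurve

/-- For every genus g ≥ 2 there is a transitive monodromy pair on 8g points
consisting of 4g transpositions and 2g four-cycles whose product σ₁σ₀ has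
two faces of degree 4g, and such that σ₁²σ₀ splits as two disjoint cycles of
equal length 4g: the monodromy of a uniform filling curve in general position
with two faces. -/
theorem exists_uniform_filling_curve_two_faces (g : ℕ) (hg : 2 ≤ g) :
    ∃ σ₀ σ₁ : Equiv.Perm (Fin (8 * g)),
      σ₀.cycleType = Multiset.replicate (4 * g) 2 ∧
      σ₁.cycleType = Multiset.replicate (2 * g) 4 ∧
      (σ₁ * σ₀).cycleType = {4 * g, 4 * g} ∧
      (∀ x y : Fin (8 * g),
        ∃ π ∈ Subgroup.closure ({σ₀, σ₁} : Set (Equiv.Perm (Fin (8 * g)))),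
          π x = y) ∧
      (σ₁ ^ 2 * σ₀).cycleType = {4 * g, 4 * g} := by
  obtain ⟨ι, _, _, h_card, ⟨B⟩⟩ := TwoFaceBlock.exists_card_eq g hg
  have : Nontrivial ι := Fintype.one_lt_card_iff_nontrivial.1 (by omega)
  let e : ι ⊕ ι ≃ Fin (8 * g) := Fintype.equivFinOfCardEq (by rw [Fintype.card_sum]; omega)
  have h_curve := cycleType_traversal B.sameCycle_rot
  rw [h_card] at h_curve
  refine ⟨e.permCongrHom B.edgePerm, e.permCongrHom B.vertexPerm, ?_, ?_, ?_, ?_, ?_⟩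
  · rw [cycleType_permCongrHom, B.cycleType_edgePerm, h_card]
  · rw [cycleType_permCongrHom, B.cycleType_vertexPerm, h_card]
    congr 1
    omega
  · rw [← map_mul, cycleType_permCongrHom, B.vertexPerm_mul_edgePerm, Perm.cycleType_conj, h_curve]
  · have := B.isPretransitive_closure
    rw [← Set.image_pair]
    exact exists_mem_closure_permCongrHom_apply_eq e
  · rw [← map_pow, ← map_mul, cycleType_permCongrHom, B.vertexPerm_sq_mul_edgePerm, h_curve]
end

section
/- Let σ₀, σ₁ be permutations of Fin 24 such that the subgroup generated by σ₀ and σ₁ acts transitively on Fin 24, the cycle type of σ₀ consists of 12 copies of 2 (twelve disjoint transpositions), the cycle type of σ₁ consists of 6 copies of 4 (six disjoint 4-cycles), and the cycle type of σ₁σ₀ consists of 4 copies of 6 (four disjoint 6-cycles). Then the cycle type of σ₁²σ₀ is NOT the multiset {12, 12}; i.e. σ₁²σ₀ never splits as a product of two disjoint 12-cycles. (Consequently every uniform multicurve that fills up the genus 2 surface and decomposes it into 4 hexagonal faces has more than one component.) -/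
/-!
The dessin is a filling multicurve on the genus 2 surface: `σ₁` turns around its six crossings,
`σ₀` reverses its twelve edges, and `σ₁ ^ 2 * σ₀` travels along its components. If `σ₁ ^ 2 * σ₀`
were a product of two 12-cycles, these would be the two directions of travel along a single curve.
Numbering the successive passages of that curve through the crossings by `Fin 12`, the dessin
becomes a Gauss diagram: a perfect matching of the passages by six chords, each with a sign that
says from which side the two strands cross. The faces are then read off the diagram, and all of
them must be hexagons.

After a rotation and possibly a reversal of the curve, the chord at passage `0` is a shortest one
and has a prescribed sign. A backtracking search over the chords, abandoning a branch as soon as a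
face closes up too early or fails to close up after six steps, finds no such diagram.
-/

open Equiv Function

theorem minimalPeriod_eq_card_support_cycleOf {α : Type*} [Fintype α] [DecidableEq α]
    {σ : Perm α} {x : α} (hx : x ∈ σ.support) :
    minimalPeriod σ x = (σ.cycleOf x).support.card := by
  have hdvd (k : ℕ) : IsPeriodicPt σ k x ↔ (σ.cycleOf x).support.card ∣ k := by
    rw [IsPeriodicPt, IsFixedPt, Perm.iterate_eq_pow]
    exact (σ.isCycleOn_support_cycleOf x).pow_apply_eq (by simpa using hx)
  exact Nat.dvd_antisymm ((hdvd _).2 dvd_rfl).minimalPeriod_dvd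
    ((hdvd _).1 (isPeriodicPt_minimalPeriod σ x))

theorem minimalPeriod_eq_of_cycleType_eq_replicate {α : Type*} [Fintype α] [DecidableEq α]
    {σ : Perm α} {j m : ℕ} (hσ : σ.cycleType = Multiset.replicate j m)
    (hcard : Fintype.card α = j * m) (x : α) : minimalPeriod σ x = m := by
  have hsupp : σ.support = Finset.univ := by
    rw [← Finset.card_eq_iff_eq_univ, ← σ.sum_cycleType, hσ, Multiset.sum_replicate, smul_eq_mul,
      hcard]
  have hx : x ∈ σ.support := hsupp ▸ Finset.mem_univ x
  have hmem : (σ.cycleOf x).support.card ∈ σ.cycleType :=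
    Multiset.mem_map_of_mem _ (Perm.cycleOf_mem_cycleFactorsFinset_iff.2 hx)
  rw [minimalPeriod_eq_card_support_cycleOf hx]
  exact Multiset.eq_of_mem_replicate (hσ ▸ hmem)

theorem minimalPeriod_apply_of_semiconj {α β : Type*} {f : α → α} {g : β → β} {φ : α → β}
    (h : Semiconj φ f g) (hφ : Injective φ) (x : α) : minimalPeriod g (φ x) = minimalPeriod f x :=
  minimalPeriod_eq_minimalPeriod_iff.2 fun k ↦ by
    rw [IsPeriodicPt, IsFixedPt, ← (h.iterate_right k) x, hφ.eq_iff, IsPeriodicPt, IsFixedPt]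

theorem involutive_of_minimalPeriod_eq_two {α : Type*} {f : α → α}
    (hf : ∀ y, minimalPeriod f y = 2) : Involutive f := fun y ↦ by
  have h := isPeriodicPt_minimalPeriod f y
  rwa [hf] at h

theorem apply_ne_of_one_lt_minimalPeriod {α : Type*} {f : α → α} {y : α}
    (hf : 1 < minimalPeriod f y) : f y ≠ y := fun h ↦
  hf.ne' (minimalPeriod_eq_one_iff_isFixedPt.2 h)

theorem mul_zpow_mul_of_mul_self_eq_one {G : Type*} [Group G] {a b : G} (ha : a * a = 1)
    (hb : b * b = 1) (k : ℤ) : b * (b * a) ^ k = (b * a) ^ (-k) * b := by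
  have hconj : b * (b * a) * b⁻¹ = (b * a)⁻¹ := by
    rw [← mul_assoc, hb, one_mul, mul_inv_rev, inv_eq_of_mul_eq_one_left ha]
  rw [← inv_zpow', ← hconj, conj_zpow, inv_mul_cancel_right]

-- A coincidence would make the reflection `b` or `a` fix the point halfway between `y` and `b y`.
theorem zpow_mul_apply_ne {α : Type*} {a b : Perm α} (ha : Involutive a) (hb : Involutive b)
    (ha_ne : ∀ y, a y ≠ y) (hb_ne : ∀ y, b y ≠ y) (k : ℤ) (y : α) : ((b * a) ^ k) y ≠ b y := by
  intro hk
  have hreflect (j : ℤ) : b (((b * a) ^ j) y) = ((b * a) ^ (k - j)) y := by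
    rw [← Perm.mul_apply, mul_zpow_mul_of_mul_self_eq_one (Perm.ext ha) (Perm.ext hb),
      Perm.mul_apply, ← hk, ← Perm.mul_apply, ← zpow_add, neg_add_eq_sub]
  obtain ⟨j, rfl | rfl⟩ := k.even_or_odd'
  · exact hb_ne (((b * a) ^ j) y) ((hreflect j).trans (by congr 2; ring))
  · refine ha_ne (((b * a) ^ j) y) ?_
    calc a (((b * a) ^ j) y) = b (((b * a) ^ (1 + j)) y) := by
          rw [zpow_one_add, Perm.mul_apply, Perm.mul_apply, hb]
      _ = ((b * a) ^ j) y := (hreflect _).trans (by congr 2; ring)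

section PartialMap

variable {β : Type*}

/-- The function `f` extends the partial function `P`, where `none` stands for an undefined
value. -/
def ExtendsPartial (f : β → β) (P : β → Option β) : Prop := ∀ ⦃c e⦄, P c = some e → f c = e

variable [DecidableEq β]

theorem ExtendsPartial.update {f : β → β} {P : β → Option β} (hP : ExtendsPartial f P) (c : β) :
    ExtendsPartial f (Function.update P c (some (f c))) := by
  intro d e h
  obtain rfl | hdc := eq_or_ne d c
  · simpa using h
  · exact hP (by simpa [hdc] using h)

/-- Whether the known part of the orbit of `c` under the partial function `P` is compatible with
this orbit reaching `d` after `k` steps and not earlier (apart from its start). -/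
def mayFirstReach (P : β → Option β) (d : β) : ℕ → β → Bool
  | 0, _ => false
  | k + 1, c =>
    match P c with
    | none => true
    | some e => if e = d then k == 0 else mayFirstReach P d k e

variable {f : β → β} {P : β → Option β}

theorem ExtendsPartial.mayFirstReach_eq_true (hP : ExtendsPartial f P) {c d : β} {k : ℕ}
    (hk : 0 < k) (hreach : f^[k] c = d) (hfirst : ∀ i, 0 < i → i < k → f^[i] c ≠ d) :
    mayFirstReach P d k c = true := by
  induction k generalizing c with
  | zero => exact absurd hk (lt_irrefl 0)
  | succ k ih =>
    rw [mayFirstReach]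
    split
    case h_1 => rfl
    case h_2 e he =>
      obtain rfl := hP he
      obtain rfl | hk := k.eq_zero_or_pos
      · exact if_pos hreach
      · rw [if_neg (show f c ≠ d from hfirst 1 one_pos (by lia))]
        exact ih hk hreach fun i _ hik ↦ hfirst (i + 1) (by lia) (by lia)

theorem ExtendsPartial.mayFirstReach_minimalPeriod (hP : ExtendsPartial f P) {c : β}
    (hc : 0 < minimalPeriod f c) : mayFirstReach P c (minimalPeriod f c) c = true :=
  hP.mayFirstReach_eq_true hc iterate_minimalPeriod fun _ hi hlt ↦
    not_isPeriodicPt_of_pos_of_lt_minimalPeriod hi.ne' hlt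

end PartialMap

/-- A Gauss diagram of a closed curve with `n` passages through its double points, numbered
cyclically along the curve: `mate t` is the other passage through the double point of passage `t`.
A quarter turn around the double point takes the direction of travel at passage `t` to the direction
of travel at passage `mate t` if `flip t = false`, and to the opposite one if `flip t = true`. -/
structure GaussDiagram (n : ℕ) where
  mate : Fin n → Fin n
  flip : Fin n → Bool
  mate_mate (t : Fin n) : mate (mate t) = t
  flip_mate (t : Fin n) : flip (mate t) = !flip t

namespace GaussDiagram

/-- A dart of a closed curve with `n` passages: `(t, true)` leaves passage `t` in the direction of
travel, and `(t, false)` leaves it backwards. -/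
abbrev Dart (n : ℕ) : Type := Fin n × Bool

variable {n : ℕ}

/-- The half turn of a dart around its double point. -/
def opposite (d : Dart n) : Dart n := (d.1, !d.2)

/-- The quarter turn of a dart around its double point. -/
def rotation (D : GaussDiagram n) (d : Dart n) : Dart n := (D.mate d.1, d.2 ^^ D.flip d.1)

theorem mate_ne_self (D : GaussDiagram n) (t : Fin n) : D.mate t ≠ t := fun h ↦ by
  simpa [h] using D.flip_mate t

theorem exists_rotation_eq {ρ : Dart n → Dart n} (hρ : ∀ d, ρ (ρ d) = opposite d) :
    ∃ D : GaussDiagram n, D.rotation = ρ := by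
  have hopp (d : Dart n) : ρ (opposite d) = opposite (ρ d) := by rw [← hρ, hρ]
  have hrot (d : Dart n) : ρ d = ((ρ (d.1, true)).1, d.2 ^^ !(ρ (d.1, true)).2) := by
    obtain ⟨t, _ | _⟩ := d
    · simpa [opposite] using hopp (t, true)
    · simp
  have hsq (t : Fin n) : ((ρ ((ρ (t, true)).1, true)).1,
      (ρ (t, true)).2 ^^ !(ρ ((ρ (t, true)).1, true)).2) = (t, false) := by
    rw [← hrot]
    exact hρ (t, true)
  refine ⟨⟨fun t ↦ (ρ (t, true)).1, fun t ↦ !(ρ (t, true)).2,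
    fun t ↦ congrArg Prod.fst (hsq t), fun t ↦ ?_⟩, funext fun d ↦ (hrot d).symm⟩
  have hflip : (ρ (t, true)).2 = !(ρ ((ρ (t, true)).1, true)).2 :=
    bne_eq_false_iff_eq.1 (congrArg Prod.snd (hsq t))
  rw [Bool.not_not, hflip]

section dartAt

variable {α : Type*} {a b : Perm α} {x : α}

/-- The dart `x` of a surface map, with `a` reversing edges and `b` making half turns around double
points, generates a closed curve; `dartAt a b x` finds the darts of this curve in the map, with `x`
leaving passage `0` in the direction of travel. -/
def dartAt (a b : Perm α) (x : α) : Dart n → α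
  | (t, true) => ((b * a) ^ (t : ℕ)) x
  | (t, false) => b (((b * a) ^ (t : ℕ)) x)

theorem dartAt_opposite (hb : Involutive b) (d : Dart n) :
    dartAt a b x (opposite d) = b (dartAt a b x d) := by
  obtain ⟨t, _ | _⟩ := d
  · exact (hb _).symm
  · rfl

theorem dartAt_injective (ha : Involutive a) (hb : Involutive b) (ha_ne : ∀ y, a y ≠ y)
    (hb_ne : ∀ y, b y ≠ y) (hx : minimalPeriod (b * a : Perm α) x = n) :
    Injective (dartAt a b x : Dart n → α) := by
  have hpow {t u : Fin n} (h : ((b * a) ^ (t : ℕ)) x = ((b * a) ^ (u : ℕ)) x) : t = u := by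
    rw [← Perm.iterate_eq_pow, ← Perm.iterate_eq_pow] at h
    exact Fin.ext (iterate_injOn_Iio_minimalPeriod (hx ▸ t.2) (hx ▸ u.2) h)
  have hne (t u : Fin n) : ((b * a) ^ (t : ℕ)) x ≠ b (((b * a) ^ (u : ℕ)) x) := by
    have h := zpow_mul_apply_ne ha hb ha_ne hb_ne (t - u) (((b * a) ^ (u : ℕ)) x)
    rwa [← zpow_natCast, ← Perm.mul_apply, ← zpow_add, sub_add_cancel, zpow_natCast] at h
  rintro ⟨t, _ | _⟩ ⟨u, _ | _⟩ h
  · exact congrArg (·, false) (hpow (b.injective h))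
  · exact absurd h.symm (hne u t)
  · exact absurd h (hne t u)
  · exact congrArg (·, true) (hpow h)

end dartAt

variable [NeZero n]

/-- The dart running along the same edge in the other direction. -/
def edge : Dart n → Dart n
  | (t, true) => (t + 1, false)
  | (t, false) => (t - 1, true)

/-- The map that takes a dart to the next one around a face. -/
def faceMap (D : GaussDiagram n) (d : Dart n) : Dart n := D.rotation (edge d)

/-- All faces of the diagram are `p`-gons. -/
def HasFaceDegree (D : GaussDiagram n) (p : ℕ) : Prop := ∀ d, minimalPeriod D.faceMap d = p

section dartAt

variable {α : Type*} {a b : Perm α} {x : α}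

theorem dartAt_add_one (hx : IsPeriodicPt (b * a : Perm α) n x) (t : Fin n) :
    dartAt a b x (t + 1, true) = b (a (dartAt a b x (t, true))) := by
  have hmod : ((b * a) ^ (((t : ℕ) + 1) % n)) x = ((b * a) ^ ((t : ℕ) + 1)) x := by
    rw [← Perm.iterate_eq_pow, ← Perm.iterate_eq_pow, hx.iterate_mod_apply]
  rw [dartAt, Fin.val_add, Fin.val_one', Nat.add_mod_mod, hmod, pow_succ']
  rfl

theorem dartAt_edge (ha : Involutive a) (hb : Involutive b)
    (hx : IsPeriodicPt (b * a : Perm α) n x) (d : Dart n) :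
    dartAt a b x (edge d) = a (dartAt a b x d) := by
  have hforward (t : Fin n) : dartAt a b x (t + 1, false) = a (dartAt a b x (t, true)) :=
    (dartAt_opposite hb (t + 1, true)).trans ((congrArg b (dartAt_add_one hx t)).trans (hb _))
  obtain ⟨t, _ | _⟩ := d
  · rw [edge, ← ha (dartAt a b x _), ← hforward, sub_add_cancel]
  · exact hforward t

theorem exists_semiconj_faceMap [Fintype α] {g : Perm α} (hcard : Fintype.card α = n * 2)
    (ha : ∀ y, minimalPeriod a y = 2) (hg : ∀ y, minimalPeriod g y = 4)
    (hx : minimalPeriod (g ^ 2 * a : Perm α) x = n) :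
    ∃ (D : GaussDiagram n) (φ : Dart n ≃ α), Semiconj φ D.faceMap (g * a : Perm α) := by
  have hg_sq (y : α) : minimalPeriod (g ^ 2 : Perm α) y = 2 := by
    rw [← Perm.iterate_eq_pow, minimalPeriod_iterate_eq_div_gcd two_ne_zero, hg]
    rfl
  have ha_inv := involutive_of_minimalPeriod_eq_two ha
  have hg_inv := involutive_of_minimalPeriod_eq_two hg_sq
  have hinj : Injective (dartAt a (g ^ 2) x : Dart n → α) :=
    dartAt_injective ha_inv hg_inv (fun y ↦ apply_ne_of_one_lt_minimalPeriod (by simp [ha]))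
      (fun y ↦ apply_ne_of_one_lt_minimalPeriod (by simp [hg_sq])) hx
  let φ : Dart n ≃ α := Equiv.ofBijective (dartAt a (g ^ 2) x)
    ((Fintype.bijective_iff_injective_and_card _).2 ⟨hinj, by simp [hcard]⟩)
  have hopp (d : Dart n) : φ (opposite d) = g (g (φ d)) := dartAt_opposite hg_inv d
  have hedge (d : Dart n) : φ (edge d) = a (φ d) :=
    dartAt_edge ha_inv hg_inv (hx ▸ isPeriodicPt_minimalPeriod _ x) d
  obtain ⟨D, hD⟩ := exists_rotation_eq (ρ := fun d ↦ φ.symm (g (φ d))) fun d ↦ by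
    rw [φ.apply_symm_apply, ← hopp, φ.symm_apply_apply]
  refine ⟨D, φ, fun d ↦ ?_⟩
  rw [faceMap, hD, φ.apply_symm_apply, hedge, Perm.mul_apply]

end dartAt

theorem hasFaceDegree_iff_of_semiconj {α : Type*} {D : GaussDiagram n} {f : α → α}
    {φ : Dart n ≃ α} (hφ : Semiconj φ D.faceMap f) {p : ℕ} :
    D.HasFaceDegree p ↔ ∀ y, minimalPeriod f y = p := by
  simp_rw [HasFaceDegree, ← φ.forall_congr_right,
    minimalPeriod_apply_of_semiconj hφ φ.injective]

section normalization

/-- The diagram obtained by renumbering the passages with `e`. -/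
def renumber (D : GaussDiagram n) (e : Perm (Fin n)) : GaussDiagram n where
  mate t := e (D.mate (e.symm t))
  flip t := D.flip (e.symm t)
  mate_mate t := by simp [D.mate_mate]
  flip_mate t := by simp [D.flip_mate]

theorem hasFaceDegree_renumber {D : GaussDiagram n} {p : ℕ} (hD : D.HasFaceDegree p)
    {e : Perm (Fin n)} {η : Perm Bool} (he : Semiconj (Equiv.prodCongr e η) edge edge) :
    (D.renumber e).HasFaceDegree p := by
  have hη : ∀ (η : Perm Bool) (ε s : Bool), η (ε ^^ s) = (η ε ^^ s) := by decide
  have hrot : Semiconj (Equiv.prodCongr e η) D.rotation (D.renumber e).rotation := fun d ↦ by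
    simp [rotation, renumber, hη]
  exact fun d ↦ (hasFaceDegree_iff_of_semiconj (hrot.comp_right he)).1 hD d

theorem semiconj_subRight_edge (r : Fin n) :
    Semiconj (Equiv.prodCongr (Equiv.subRight r) (Equiv.refl Bool)) edge edge := by
  rintro ⟨t, _ | _⟩
  · exact congrArg (·, true) (sub_right_comm t 1 r)
  · exact congrArg (·, false) (add_sub_right_comm t 1 r)

theorem semiconj_subLeft_edge (r : Fin n) :
    Semiconj (Equiv.prodCongr (Equiv.subLeft r) Equiv.boolNot) edge edge := by
  rintro ⟨t, _ | _⟩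
  · exact congrArg (·, false) ((sub_sub_eq_add_sub r t 1).trans (add_sub_right_comm r 1 t))
  · exact congrArg (·, true) (sub_add_eq_sub_sub r t 1)

/-- The chord at passage `0` is flipped, and no chord has a smaller cyclic gap from one of its ends
to the other than this chord has from `0` to `mate 0`. -/
structure IsNormalized (D : GaussDiagram n) : Prop where
  flip_zero : D.flip 0 = true
  mate_zero_le (t : Fin n) : D.mate 0 ≤ D.mate t - t

theorem HasFaceDegree.exists_isNormalized {D : GaussDiagram n} {p : ℕ} (hD : D.HasFaceDegree p) :
    ∃ D' : GaussDiagram n, D'.HasFaceDegree p ∧ D'.IsNormalized := by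
  obtain ⟨r, hr⟩ := Finite.exists_min fun t ↦ D.mate t - t
  let D₁ := D.renumber (Equiv.subRight r)
  have hD₁ : D₁.HasFaceDegree p := hasFaceDegree_renumber hD (semiconj_subRight_edge r)
  have hmin (t : Fin n) : D₁.mate 0 ≤ D₁.mate t - t := by
    simpa [D₁, renumber, sub_sub, add_comm] using hr (t + r)
  cases hflip : D₁.flip 0 with
  | true => exact ⟨D₁, hD₁, hflip, hmin⟩
  | false =>
    -- Reversing the curve so that `0` and `mate 0` trade places keeps the gaps.
    refine ⟨D₁.renumber (Equiv.subLeft (D₁.mate 0)),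
      hasFaceDegree_renumber hD₁ (semiconj_subLeft_edge _), ?_, fun t ↦ ?_⟩
    · simp [renumber, D₁.flip_mate, hflip]
    · have h := hmin (D₁.mate (D₁.mate 0 - t))
      rw [D₁.mate_mate] at h
      simpa [renumber, D₁.mate_mate, neg_add_eq_sub, sub_right_comm] using h

end normalization

section search

/-- The part of the face map of a Gauss diagram that is determined by some of its chords. -/
abbrev PartialFaceMap (n : ℕ) : Type := Dart n → Option (Dart n)

/-- Record the two darts arriving at passage `t`, given that `mate t = u` and `flip t = s`. -/
def addPassage (P : PartialFaceMap n) (t u : Fin n) (s : Bool) : PartialFaceMap n :=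
  Function.update (Function.update P (t - 1, true) (some (u, s))) (t + 1, false) (some (u, !s))

/-- Record the chord between `t` and `u`, with `flip t = s`. -/
def addChord (P : PartialFaceMap n) (t u : Fin n) (s : Bool) : PartialFaceMap n :=
  addPassage (addPassage P t u s) u t (!s)

/-- The faces through the two darts arriving at passage `t` can still become `p`-gons. -/
def passageAdmissible (p : ℕ) (P : PartialFaceMap n) (t : Fin n) : Bool :=
  mayFirstReach P (t - 1, true) p (t - 1, true) && mayFirstReach P (t + 1, false) p (t + 1, false)

/-- The chord between `t` and `u`, already recorded in `P`, has both gaps at least `m` and lets the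
faces that it meets become `p`-gons. -/
def chordAdmissible (p : ℕ) (m : Fin n) (P : PartialFaceMap n) (t u : Fin n) : Bool :=
  decide (m ≤ u - t) && decide (m ≤ t - u) && passageAdmissible p P t && passageAdmissible p P u

/-- Backtracking over the chords at the first of the free passages: `true` certifies that `P` does
not come from a diagram with all gaps at least `m` and all faces `p`-gons whose remaining chords
join the passages in the list. The first natural number bounds the depth of the search. -/
def refutesFrom (p : ℕ) (m : Fin n) : ℕ → List (Fin n) → PartialFaceMap n → Bool
  | k + 1, t :: F, P =>
    F.all fun u ↦ [true, false].all fun s ↦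
      !chordAdmissible p m (addChord P t u s) t u ||
        refutesFrom p m k (F.erase u) (addChord P t u s)
  | _, _, _ => false

/-- The search for a normalized diagram with all faces `p`-gons, in which `order` lists the nonzero
passages in the order in which they are matched; `true` certifies that there is none. -/
def refutes (p : ℕ) (order : List (Fin n)) : Bool :=
  order.all fun m ↦
    !chordAdmissible p m (addChord (fun _ ↦ none) 0 m true) 0 m ||
      refutesFrom p m order.length (order.erase m) (addChord (fun _ ↦ none) 0 m true)

variable {D : GaussDiagram n} {P : PartialFaceMap n} {p : ℕ} {m : Fin n}

theorem extendsPartial_addPassage (hP : ExtendsPartial D.faceMap P) (t : Fin n) :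
    ExtendsPartial D.faceMap (addPassage P t (D.mate t) (D.flip t)) := by
  simpa [addPassage, faceMap, edge, rotation] using (hP.update (t - 1, true)).update (t + 1, false)

theorem extendsPartial_addChord (hP : ExtendsPartial D.faceMap P) (t : Fin n) :
    ExtendsPartial D.faceMap (addChord P t (D.mate t) (D.flip t)) := by
  simpa [addChord, D.mate_mate, D.flip_mate] using
    extendsPartial_addPassage (extendsPartial_addPassage hP t) (D.mate t)

theorem HasFaceDegree.passageAdmissible_eq_true (hD : D.HasFaceDegree p) (hp : 0 < p)
    (hP : ExtendsPartial D.faceMap P) (t : Fin n) : passageAdmissible p P t = true := by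
  have hreach (d : Dart n) : mayFirstReach P d p d = true :=
    hD d ▸ hP.mayFirstReach_minimalPeriod (hD d ▸ hp)
  simp [passageAdmissible, hreach]

theorem HasFaceDegree.chordAdmissible_eq_true (hD : D.HasFaceDegree p) (hp : 0 < p)
    (hm : ∀ t, m ≤ D.mate t - t) (hP : ExtendsPartial D.faceMap P) (t : Fin n) :
    chordAdmissible p m P t (D.mate t) = true := by
  have hm_mate : m ≤ t - D.mate t := by simpa [D.mate_mate] using hm (D.mate t)
  simp [chordAdmissible, hD.passageAdmissible_eq_true hp hP, hm, hm_mate]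

theorem HasFaceDegree.refutesFrom_eq_false (hD : D.HasFaceDegree p) (hp : 0 < p)
    (hm : ∀ t, m ≤ D.mate t - t) (k : ℕ) {F : List (Fin n)} (hF : F.Nodup)
    (hmate : ∀ t ∈ F, D.mate t ∈ F) (hP : ExtendsPartial D.faceMap P) :
    refutesFrom p m k F P = false := by
  induction k generalizing F P with
  | zero => rfl
  | succ k ih =>
    cases F with
    | nil => rfl
    | cons t F =>
      have ⟨ht, hF⟩ := List.nodup_cons.1 hF
      have hP_chord := extendsPartial_addChord hP t
      have hmem : D.mate t ∈ F := by simpa [D.mate_ne_self] using hmate t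
      have herase (v : Fin n) (hv : v ∈ F.erase (D.mate t)) : D.mate v ∈ F.erase (D.mate t) := by
        grind [hF.mem_erase_iff, D.mate_mate, D.mate_ne_self]
      have hflip : D.flip t ∈ [true, false] := by cases D.flip t <;> simp
      rw [refutesFrom, List.all_eq_false]
      refine ⟨D.mate t, hmem, ?_⟩
      rw [Bool.not_eq_true, List.all_eq_false]
      refine ⟨D.flip t, hflip, ?_⟩
      simp [hD.chordAdmissible_eq_true hp hm hP_chord, ih (hF.erase _) herase hP_chord]

theorem HasFaceDegree.refutes_eq_false (hD : D.HasFaceDegree p) (hp : 0 < p)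
    (hnorm : D.IsNormalized) {order : List (Fin n)} (hnodup : order.Nodup)
    (horder : ∀ t, t ∈ order ↔ t ≠ 0) : refutes p order = false := by
  have hempty : ExtendsPartial D.faceMap (fun _ ↦ none) := fun _ _ h ↦ nomatch h
  have hP := extendsPartial_addChord hempty 0
  rw [hnorm.flip_zero] at hP
  have hmate (t : Fin n) (ht : t ∈ order.erase (D.mate 0)) : D.mate t ∈ order.erase (D.mate 0) := by
    grind [hnodup.mem_erase_iff, D.mate_mate t, D.mate_mate 0]
  rw [refutes, List.all_eq_false]
  refine ⟨D.mate 0, (horder _).2 (D.mate_ne_self 0), ?_⟩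
  simp [hD.chordAdmissible_eq_true hp hnorm.mate_zero_le hP,
    hD.refutesFrom_eq_false hp hnorm.mate_zero_le order.length (hnodup.erase _) hmate hP]

-- Any order of the passages works; this one was found by trial to make the search tree small.
theorem refutes_six : refutes 6 ([11, 3, 7, 8, 4, 9, 5, 1, 2, 6, 10] : List (Fin 12)) = true := by
  decide +kernel

end search

theorem not_hasFaceDegree_six (D : GaussDiagram 12) : ¬ D.HasFaceDegree 6 := by
  intro hD
  obtain ⟨D', hD', hnorm⟩ := hD.exists_isNormalized
  have hfalse := hD'.refutes_eq_false (by norm_num) hnorm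
    (order := [11, 3, 7, 8, 4, 9, 5, 1, 2, 6, 10]) (by decide) (by decide)
  exact Bool.false_ne_true (hfalse.symm.trans refutes_six)

end GaussDiagram

theorem genus_two_type_246_not_single_curve_general {α : Type*} [Fintype α] [DecidableEq α]
    (hα : Fintype.card α = 24) (σ₀ σ₁ : Perm α)
    (h0 : σ₀.cycleType = Multiset.replicate 12 2)
    (h1 : σ₁.cycleType = Multiset.replicate 6 4)
    (h10 : (σ₁ * σ₀).cycleType = Multiset.replicate 4 6) :
    (σ₁ ^ 2 * σ₀).cycleType ≠ {12, 12} := by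
  intro hcurve
  have hedge := minimalPeriod_eq_of_cycleType_eq_replicate h0 hα
  have hcrossing := minimalPeriod_eq_of_cycleType_eq_replicate h1 hα
  have hface := minimalPeriod_eq_of_cycleType_eq_replicate h10 hα
  have hpassage := minimalPeriod_eq_of_cycleType_eq_replicate (j := 2) (m := 12) hcurve hα
  obtain ⟨x⟩ : Nonempty α := Fintype.card_pos_iff.1 (hα ▸ by norm_num)
  obtain ⟨D, φ, hφ⟩ := GaussDiagram.exists_semiconj_faceMap hα hedge hcrossing (hpassage x)
  exact D.not_hasFaceDegree_six ((GaussDiagram.hasFaceDegree_iff_of_semiconj hφ).2 hface)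

/-- For any transitive monodromy pair of a uniform dessin of type (2,4,6) and
genus 2 (twelve transpositions, six 4-cycles, four 6-cycle faces on 24 edges),
the permutation σ₁²σ₀ never splits as two disjoint 12-cycles: every uniform
filling multicurve of genus 2 with four hexagonal faces has more than one
component. -/
theorem genus_two_type_246_not_single_curve
    (σ₀ σ₁ : Equiv.Perm (Fin 24))
    (htrans : ∀ x y : Fin 24,
      ∃ π ∈ Subgroup.closure ({σ₀, σ₁} : Set (Equiv.Perm (Fin 24))), π x = y)
    (h0 : σ₀.cycleType = Multiset.replicate 12 2)
    (h1 : σ₁.cycleType = Multiset.replicate 6 4)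
    (h10 : (σ₁ * σ₀).cycleType = Multiset.replicate 4 6) :
    (σ₁ ^ 2 * σ₀).cycleType ≠ {12, 12} := by
  exact genus_two_type_246_not_single_curve_general (Fintype.card_fin 24) σ₀ σ₁ h0 h1 h10
end

section
/- Consider the set of pairs (σ₀, σ₁) of permutations of Fin 24 such that the subgroup generated by σ₀ and σ₁ acts transitively, the cycle type of σ₀ consists of 12 copies of 2, the cycle type of σ₁ consists of 6 copies of 4, and the cycle type of σ₁σ₀ consists of 4 copies of 6. Declare two such pairs (σ₀, σ₁) and (σ₀′, σ₁′) equivalent if there exists a permutation π of Fin 24 with σ₀′ = πσ₀π⁻¹ and σ₁′ = πσ₁π⁻¹. Then the number of equivalence classes is exactly 40. -/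
/-- The monodromy pairs of uniform dessins of type (2,4,6) and genus 2:
transitive pairs on 24 points with twelve transpositions, six 4-cycles and
four 6-cycle faces. -/
def IsType246Genus2Pair (p : Equiv.Perm (Fin 24) × Equiv.Perm (Fin 24)) : Prop :=
  (∀ x y : Fin 24,
    ∃ π ∈ Subgroup.closure ({p.1, p.2} : Set (Equiv.Perm (Fin 24))), π x = y) ∧
  p.1.cycleType = Multiset.replicate 12 2 ∧
  p.2.cycleType = Multiset.replicate 6 4 ∧
  (p.2 * p.1).cycleType = Multiset.replicate 4 6

/-- Simultaneous conjugacy of monodromy pairs. -/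
def SimConj246 (p q : {p // IsType246Genus2Pair p}) : Prop :=
  ∃ π : Equiv.Perm (Fin 24),
    q.1.1 = π * p.1.1 * π⁻¹ ∧ q.1.2 = π * p.1.2 * π⁻¹

/-!
Explore a uniform map from a chosen root dart: name the darts in order of discovery, and repeatedly
find the partner of the dart at the end of the first face arc whose continuation is unknown. The
partner is either a dart already named or the first dart of a new vertex. Since each face has
exactly `f` sides, most choices of partner are impossible, and the search tree has only 339 leaves
when `d = 4`, `f = 6` and there are 24 darts.

Each rooted map follows exactly one code produced by the search. A class of maps with automorphism
group `A` therefore gives rise to `24 / |A|` codes, and each of these can be followed from `|A|`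
roots of the class. The sum over all codes of these numbers of roots is thus 24 times the number of
classes; it equals 960.
-/

namespace UniformMap

open Function Set
open Equiv (Perm)

/-! ### Cycle types and minimal periods -/

section Period
variable {α β : Type*}

theorem minimalPeriod_eq_of_semiconj {h : α → β} {f : α → α} {g : β → β} (hh : Injective h)
    (hfg : Semiconj h f g) (x : α) : minimalPeriod g (h x) = minimalPeriod f x :=
  minimalPeriod_eq_minimalPeriod_iff.2 fun n => by
    rw [IsPeriodicPt, IsFixedPt, ← (hfg.iterate_right n).eq, hh.eq_iff]
    rfl

theorem bijective_of_minimalPeriod_pos {f : α → α} (hf : ∀ x, 0 < minimalPeriod f x) :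
    Bijective f := by
  have hper : periodicPts f = univ :=
    eq_univ_of_forall fun x => minimalPeriod_pos_iff_mem_periodicPts.1 (hf x)
  simpa only [hper, bijOn_univ] using bijOn_periodicPts f

theorem cycleType_eq_replicate_iff [Fintype α] [DecidableEq α] {σ : Perm α} {c m : ℕ}
    (hm : 1 < m) (hcm : c * m = Fintype.card α) :
    σ.cycleType = Multiset.replicate c m ↔ ∀ x, minimalPeriod σ x = m := by
  have hcard (x : α) (hx : σ x ≠ x) : (σ.cycleOf x).support.card = minimalPeriod σ x := by
    rw [← (Perm.isCycle_cycleOf σ hx).orderOf]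
    refine Nat.dvd_right_iff_eq.1 fun n => ?_
    rw [orderOf_dvd_iff_pow_eq_one, ← isPeriodicPt_iff_minimalPeriod_dvd,
      (Perm.isCycle_cycleOf σ hx).pow_eq_one_iff' (by rwa [Perm.cycleOf_apply_self]),
      Perm.cycleOf_pow_apply_self, IsPeriodicPt, IsFixedPt, Perm.iterate_eq_pow]
  constructor
  · intro h x
    have hx : x ∈ σ.support := by
      rw [Finset.eq_univ_of_card σ.support (by rw [← Perm.sum_cycleType, h]; simpa using hcm)]
      exact Finset.mem_univ x
    rw [← hcard x (Perm.mem_support.1 hx)]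
    refine Multiset.eq_of_mem_replicate (n := c) ?_
    rw [← h, Perm.cycleType_def]
    exact Multiset.mem_map_of_mem _ (Perm.cycleOf_mem_cycleFactorsFinset_iff.2 hx)
  · intro h
    have hne (x : α) : σ x ≠ x := fun hx => by
      have := minimalPeriod_eq_one_iff_isFixedPt.2 hx
      have := h x
      omega
    have hrep : σ.cycleType = Multiset.replicate σ.cycleType.card m := by
      refine Multiset.eq_replicate_card.2 fun k hk => ?_
      rw [Perm.cycleType_def] at hk
      obtain ⟨τ, hτ, rfl⟩ := Multiset.mem_map.1 hk
      obtain ⟨x, hx⟩ := (Perm.mem_cycleFactorsFinset_iff.1 hτ).1.nonempty_support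
      rw [Perm.cycle_is_cycleOf hx hτ, Function.comp_apply, hcard x (hne x), h]
    have hsum := σ.sum_cycleType
    rw [hrep, Finset.eq_univ_of_forall fun x => Perm.mem_support.2 (hne x), Multiset.sum_replicate,
      Finset.card_univ, ← hcm, smul_eq_mul] at hsum
    rw [hrep, Nat.eq_of_mul_eq_mul_right (by omega) hsum]

end Period

/-! ### Weighted counting of classes -/

theorem countP_flatMap_eq_one {γ δ : Type*} {q : δ → Bool} {g : γ → List δ} {l : List γ} {c : γ}
    (hl : l.Nodup) (hc : c ∈ l) (h : (g c).countP q = 1)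
    (h0 : ∀ x ∈ l, x ≠ c → (g x).countP q = 0) : (l.flatMap g).countP q = 1 := by
  classical
  have hrest : ∀ x ∈ l.erase c, (g x).countP q = 0 := fun x hx =>
    h0 x (List.mem_of_mem_erase hx) ((hl.mem_erase_iff.1 hx).1)
  rw [((List.perm_cons_erase hc).flatMap_right g).countP_eq, List.flatMap_cons, List.countP_append,
    h, List.countP_flatMap, List.sum_eq_zero (by simpa using hrest), add_zero]

open Classical in
theorem sum_map_card_subtype {Ω T : Type*} [Fintype Ω] (F : Ω → T → Prop) (L : List T) :
    (L.map fun t => Nat.card {x // F x t}).sum = ∑ x, L.countP (F x ·) := by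
  induction L with
  | nil => simp
  | cons t L ih =>
    rw [List.map_cons, List.sum_cons, ih]
    simp [List.countP_cons, Finset.sum_add_distrib, Fintype.card_subtype, add_comm]

theorem sum_map_sum {ι T : Type*} [Fintype ι] (G : ι → T → ℕ) (L : List T) :
    (L.map fun t => ∑ c, G c t).sum = ∑ c, (L.map (G c)).sum := by
  induction L with
  | nil => simp
  | cons t L ih => simp [Finset.sum_add_distrib, ih]

open Classical in
/-- Each column of the class-by-code table of the numbers of roots has one nonzero entry, and each
row has sum `Fintype.card Ω`. -/
theorem card_quot_mul_card {X Ω T : Type*} [Fintype Ω] {r : X → X → Prop} [Finite (Quot r)]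
    {F : X → Ω → T → Prop} {L : List T} {g : T → ℕ}
    (hr : ∀ p q t, r p q → Nat.card {x // F p x t} = Nat.card {x // F q x t})
    (hF : ∀ p x, L.countP (F p x ·) = 1)
    (hL : ∀ t ∈ L, ∃ p, (∀ q x, F q x t → Quot.mk r q = Quot.mk r p) ∧
      Nat.card {x // F p x t} = g t) :
    Nat.card (Quot r) * Fintype.card Ω = (L.map g).sum := by
  have := Fintype.ofFinite (Quot r)
  let G (c : Quot r) (t : T) : ℕ :=
    c.lift (fun p => Nat.card {x // F p x t}) fun p q => hr p q t
  have hrow (c : Quot r) : (L.map (G c)).sum = Fintype.card Ω := by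
    induction c using Quot.ind with
    | mk p => simp only [G, sum_map_card_subtype, hF, Finset.card_eq_sum_ones, Fintype.card]
  have hcol (t : T) (ht : t ∈ L) : g t = ∑ c, G c t := by
    obtain ⟨p, hp, hg⟩ := hL t ht
    rw [Finset.sum_eq_single (Quot.mk r p) _ (by simp)]
    · exact hg.symm
    · intro c _ hc
      induction c using Quot.ind with
      | mk q => exact Nat.card_eq_zero.2 (.inl ⟨fun x => hc (hp q x.1 x.2)⟩)
  rw [List.map_congr_left hcol, sum_map_sum, Finset.sum_congr rfl fun c _ => hrow c]
  simp

/-! ### Uniform maps and codes -/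

/-- The darts of a connected map with involution `a` along the edges and rotation `b` about the
vertices, all of whose vertices have valency `d` and all of whose faces have `f` sides.
Connectedness is stated through forward-invariant sets, which suffices on a finite set of darts. -/
structure IsUniformMap {α : Type*} (d f : ℕ) (a b : α → α) : Prop where
  edge : ∀ x, minimalPeriod a x = 2
  vertex : ∀ x, minimalPeriod b x = d
  face : ∀ x, minimalPeriod (b ∘ a) x = f
  connected : ∀ s : Set α, s.Nonempty → MapsTo a s s → MapsTo b s s → s = univ

namespace IsUniformMap
variable {α : Type*} {d f : ℕ} {a b : α → α}

theorem involutive (h : IsUniformMap d f a b) : Involutive a := fun x => by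
  have hx := iterate_minimalPeriod (f := a) (x := x)
  rwa [h.edge] at hx

theorem apply_ne (h : IsUniformMap d f a b) (x : α) : a x ≠ x := fun hx => by
  simpa [h.edge] using minimalPeriod_eq_one_iff_isFixedPt.2 hx

theorem injective_vertex (h : IsUniformMap d f a b) (hd : 0 < d) : Injective b :=
  (bijective_of_minimalPeriod_pos fun x => (h.vertex x).symm ▸ hd).1

end IsUniformMap

theorem transitive_closure_pair_iff {α : Type*} [Finite α] (σ τ : Perm α) :
    (∀ x y, ∃ π ∈ Subgroup.closure {σ, τ}, π x = y) ↔
      ∀ s : Set α, s.Nonempty → MapsTo σ s s → MapsTo τ s s → s = univ := by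
  constructor
  · rintro h s ⟨x, hx⟩ hσ hτ
    refine eq_univ_of_forall fun y => ?_
    obtain ⟨π, hπ, rfl⟩ := h x y
    rw [← Subgroup.mem_toSubmonoid, Subgroup.closure_toSubmonoid_of_finite] at hπ
    induction hπ using Submonoid.closure_induction generalizing x with
    | mem _ hπ =>
      rcases hπ with rfl | rfl
      exacts [hσ hx, hτ hx]
    | one => exact hx
    | mul _ _ _ _ hπ hρ => exact hπ _ (hρ x hx)
  · intro h x y
    let orbit : Set α := {z | ∃ π ∈ Subgroup.closure {σ, τ}, π x = z}
    have hmaps {ρ : Perm α} (hρ : ρ ∈ ({σ, τ} : Set (Perm α))) : MapsTo ρ orbit orbit := by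
      rintro _ ⟨π, hπ, rfl⟩
      exact ⟨ρ * π, mul_mem (Subgroup.subset_closure hρ) hπ, rfl⟩
    have horbit := h orbit ⟨x, 1, one_mem _, rfl⟩ (hmaps (by simp)) (hmaps (by simp))
    exact horbit.ge (mem_univ y)

theorem isUniformMap_iff_cycleType {α : Type*} [Fintype α] [DecidableEq α] {σ τ : Perm α}
    {d f c₁ c₂ c₃ : ℕ} (hd : 1 < d) (hf : 1 < f) (h₁ : c₁ * 2 = Fintype.card α)
    (h₂ : c₂ * d = Fintype.card α) (h₃ : c₃ * f = Fintype.card α) :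
    IsUniformMap d f σ τ ↔ (∀ x y, ∃ π ∈ Subgroup.closure {σ, τ}, π x = y) ∧
      σ.cycleType = .replicate c₁ 2 ∧ τ.cycleType = .replicate c₂ d ∧
      (τ * σ).cycleType = .replicate c₃ f := by
  rw [cycleType_eq_replicate_iff one_lt_two h₁, cycleType_eq_replicate_iff hd h₂,
    cycleType_eq_replicate_iff hf h₃, transitive_closure_pair_iff]
  exact ⟨fun h => ⟨h.connected, h.edge, h.vertex, h.face⟩, fun h => ⟨h.2.1, h.2.2.1, h.2.2.2, h.1⟩⟩

/-- A list of edges, each recorded as a pair of dart labels: the darts of the `v`-th vertex carry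
the labels `v * d, …, v * d + d - 1`. -/
abbrev Code := List (ℕ × ℕ)

/-- `g n` with `n` evaluated first. The kernel substitutes arguments unevaluated; the match makes it
reduce `n` to a literal before `n` is copied into the body of `g`. -/
def strictly {α : Type*} (n : ℕ) (g : ℕ → α) : α :=
  match n with
  | 0 => g 0
  | k + 1 => g (k + 1)

@[simp]
theorem strictly_eq {α : Type*} (n : ℕ) (g : ℕ → α) : strictly n g = g n := by
  cases n <;> rfl

/-- The rotation about the vertices on labels: each block `v * d, …, v * d + d - 1` is turned
cyclically. -/
def rotation (d x : ℕ) : ℕ := strictly x fun x => x / d * d + (x + 1) % d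

theorem mul_add_div_of_lt {d e : ℕ} (he : e < d) (q : ℕ) : (q * d + e) / d = q := by
  rw [add_comm, Nat.add_mul_div_right _ _ he.pos, Nat.div_eq_of_lt he, zero_add]

theorem rotation_div {d : ℕ} (hd : 0 < d) (x : ℕ) : rotation d x / d = x / d := by
  rw [rotation, strictly_eq, mul_add_div_of_lt (Nat.mod_lt _ hd)]

theorem rotation_mod {d : ℕ} (hd : 0 < d) (x : ℕ) : rotation d x % d = (x % d + 1) % d := by
  rw [rotation, strictly_eq, Nat.mul_add_mod_of_lt (Nat.mod_lt _ hd), Nat.mod_add_mod]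

/-- A partial labelling of the darts of a map with values in `α`: the first `count` vertices are
labelled, the `v`-th one starting from its dart `base v`. Values of `base` from `count` on are
junk. -/
structure Labelling (α : Type*) where
  count : ℕ
  base : ℕ → α

namespace Labelling
variable {α β : Type*} {d : ℕ} {a b : α → α} {φ ψ : Labelling α}

/-- The dart with label `l`. -/
def dart (d : ℕ) (b : α → α) (φ : Labelling α) (l : ℕ) : α := b^[l % d] (φ.base (l / d))

/-- The labelling of a single vertex, starting from its dart `x`. -/
def rooted (x : α) : Labelling α := ⟨1, fun _ => x⟩

/-- Label one more vertex, starting from its dart `x`. -/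
def push (φ : Labelling α) (x : α) : Labelling α :=
  ⟨φ.count + 1, fun v => if v = φ.count then x else φ.base v⟩

/-- The transport of a labelling along a map of darts. -/
def map (h : α → β) (φ : Labelling α) : Labelling β := ⟨φ.count, h ∘ φ.base⟩

/-- Trace the edges of a code in the map with edge involution `a` and vertex rotation `b`: an edge
ending at the first unused label reveals a new vertex, any other edge has to join the two darts it
names. -/
def follow [DecidableEq α] (d : ℕ) (a b : α → α) : Labelling α → Code → Option (Labelling α)
  | φ, [] => some φ
  | φ, (i, j) :: t =>
    if j = φ.count * d then follow d a b (φ.push (a (φ.dart d b i))) t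
    else if a (φ.dart d b i) = φ.dart d b j then follow d a b φ t
    else none

theorem apply_dart (hb : ∀ x, minimalPeriod b x = d) (hd : 0 < d) (φ : Labelling α) (l : ℕ) :
    b (φ.dart d b l) = φ.dart d b (rotation d l) := by
  rw [dart, dart, rotation_div hd, rotation_mod hd, ← iterate_succ_apply' b]
  simpa only [hb] using (iterate_mod_minimalPeriod_eq (f := b) (x := φ.base (l / d))).symm

theorem dart_push_of_lt (x : α) {l : ℕ} (hl : l < φ.count * d) :
    (φ.push x).dart d b l = φ.dart d b l := by
  simp only [dart, push, if_neg (Nat.div_lt_of_lt_mul (mul_comm φ.count d ▸ hl)).ne]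

theorem dart_push_add (φ : Labelling α) (x : α) {e : ℕ} (he : e < d) :
    (φ.push x).dart d b (φ.count * d + e) = b^[e] x := by
  simp only [dart, push, Nat.mul_add_mod_of_lt he, mul_add_div_of_lt he, if_true]

theorem dart_map {b' : β → β} {h : α → β} (hb : Semiconj h b b') (φ : Labelling α) (l : ℕ) :
    (φ.map h).dart d b' l = h (φ.dart d b l) :=
  ((hb.iterate_right _).eq _).symm

@[simp]
theorem count_map (h : α → β) (φ : Labelling α) : (φ.map h).count = φ.count := rfl

theorem map_push (h : α → β) (φ : Labelling α) (x : α) :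
    (φ.push x).map h = (φ.map h).push (h x) := by
  simp only [push, map, mk.injEq, true_and]
  funext v
  exact apply_ite h _ _ _

variable [DecidableEq α]

theorem follow_map [DecidableEq β] {a' b' : β → β} {h : α → β} (hh : Injective h)
    (ha : Semiconj h a a') (hb : Semiconj h b b') (φ : Labelling α) (t : Code) :
    follow d a' b' (φ.map h) t = (follow d a b φ t).map (map h) := by
  induction t generalizing φ with
  | nil => rfl
  | cons e t ih =>
    obtain ⟨i, j⟩ := e
    simp only [follow, dart_map hb, ← ha.eq, ← map_push, hh.eq_iff, ih, count_map]
    split_ifs <;> rfl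

theorem count_le_of_follow {t : Code} (h : follow d a b φ t = some ψ) : φ.count ≤ ψ.count := by
  induction t generalizing φ with
  | nil => exact Option.some.inj h ▸ le_rfl
  | cons e t ih =>
    rw [follow] at h
    split_ifs at h with hj hij
    exacts [(Nat.le_succ _).trans (ih h), ih h]

theorem dart_of_follow {t : Code} (h : follow d a b φ t = some ψ) {l : ℕ} (hl : l < φ.count * d) :
    ψ.dart d b l = φ.dart d b l := by
  induction t generalizing φ with
  | nil => rw [Option.some.inj h]
  | cons e t ih =>
    rw [follow] at h
    split_ifs at h with hj hij
    · rw [ih h (hl.trans_le (Nat.mul_le_mul_right d (Nat.le_succ _))), dart_push_of_lt _ hl]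
    · exact ih h hl

/-- The code can be followed from `φ`, and the resulting labelling names no dart twice. -/
def EmbedsAlong (d : ℕ) (a b : α → α) (φ : Labelling α) (t : Code) : Prop :=
  ∃ ψ, follow d a b φ t = some ψ ∧ InjOn (ψ.dart d b) (Iio (ψ.count * d))

theorem EmbedsAlong.injOn {t : Code} (h : EmbedsAlong d a b φ t) :
    InjOn (φ.dart d b) (Iio (φ.count * d)) := by
  obtain ⟨ψ, hψ, hinj⟩ := h
  refine (hinj.mono (Iio_subset_Iio (Nat.mul_le_mul_right d (count_le_of_follow hψ)))).congr ?_
  exact fun l hl => dart_of_follow hψ hl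

theorem embedsAlong_nil : EmbedsAlong d a b φ [] ↔ InjOn (φ.dart d b) (Iio (φ.count * d)) := by
  simp [EmbedsAlong, follow]

theorem embedsAlong_cons_push {i : ℕ} {t : Code} :
    EmbedsAlong d a b φ ((i, φ.count * d) :: t) ↔
      EmbedsAlong d a b (φ.push (a (φ.dart d b i))) t := by
  simp [EmbedsAlong, follow]

theorem embedsAlong_cons {i j : ℕ} {t : Code} (hj : j ≠ φ.count * d) :
    EmbedsAlong d a b φ ((i, j) :: t) ↔
      a (φ.dart d b i) = φ.dart d b j ∧ EmbedsAlong d a b φ t := by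
  by_cases h : a (φ.dart d b i) = φ.dart d b j <;> simp [EmbedsAlong, follow, hj, h]

end Labelling

/-! ### Face arcs -/

theorem iterate_rotation {d : ℕ} (hd : 0 < d) (n x : ℕ) :
    (rotation d)^[n] x = x / d * d + (x + n) % d := by
  induction n with
  | zero => rw [iterate_zero_apply, add_zero, Nat.div_add_mod']
  | succ n ih =>
    rw [iterate_succ_apply', ih, rotation, strictly_eq, mul_add_div_of_lt (Nat.mod_lt _ hd),
      add_assoc, Nat.mul_add_mod', Nat.mod_add_mod, add_assoc]

theorem minimalPeriod_rotation {d : ℕ} (hd : 0 < d) (x : ℕ) : minimalPeriod (rotation d) x = d := by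
  refine eq_of_forall_dvd fun n => ?_
  rw [← isPeriodicPt_iff_minimalPeriod_dvd, IsPeriodicPt, IsFixedPt, iterate_rotation hd]
  nth_rw 3 [← Nat.div_add_mod' x d]
  rw [add_right_inj]
  exact Nat.add_modEq_left_iff

/-- A piece of a face boundary between two darts whose edges are still unknown, given by the labels
of the darts: after `source`, the face crosses `crossings` known edges before it arrives at
`target`. -/
structure Arc where
  source : ℕ
  crossings : ℕ
  target : ℕ

/-- The arcs around the `v`-th vertex before any of its edges is known. -/
def vertexArcs (d v : ℕ) : List Arc :=
  (List.range' (v * d) d).map fun s => ⟨s, 0, rotation d s⟩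

theorem map_source_vertexArcs (d v : ℕ) :
    (vertexArcs d v).map Arc.source = List.range' (v * d) d := by
  simp [vertexArcs, Function.comp_def]

theorem map_target_vertexArcs_perm {d : ℕ} (hd : 0 < d) (v : ℕ) :
    ((vertexArcs d v).map Arc.target).Perm (List.range' (v * d) d) := by
  have htarget : (vertexArcs d v).map Arc.target = (List.range' (v * d) d).map (rotation d) := by
    simp [vertexArcs, Function.comp_def]
  have hinj : Injective (rotation d) :=
    (bijective_of_minimalPeriod_pos fun x => (minimalPeriod_rotation hd x).symm ▸ hd).1
  rw [htarget]
  have hnodup : ((List.range' (v * d) d).map (rotation d)).Nodup :=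
    List.Nodup.map hinj List.nodup_range'
  refine (List.subperm_of_subset hnodup fun x hx => ?_).perm_of_length_le (by simp)
  obtain ⟨s, hs, rfl⟩ := List.mem_map.1 hx
  rw [List.mem_range'_1] at hs ⊢
  have hdiv : s / d = v := by
    rw [Nat.div_eq_iff hd]; omega
  have := Nat.mod_lt (s + 1) hd
  rw [rotation, strictly_eq, hdiv]
  omega

/-- The arcs after the edge crossing from `i` to `j` becomes known: the arc ending at `i` continues
with the arc starting at `j`. The result is `none` if this closes a face with a number of sides
other than `f`, or leaves an open arc with at least `f` crossings. -/
def fuse (f i j : ℕ) (l : List Arc) : Option (List Arc) :=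
  match l.find? (·.target = i) with
  | none => none
  | some A =>
    let l := l.eraseP (·.target = i)
    if A.source = j then
      if A.crossings + 1 = f then some l else none
    else
      match l.find? (·.source = j) with
      | none => none
      | some B =>
        if A.crossings + B.crossings + 1 < f then
          some (⟨A.source, A.crossings + B.crossings + 1, B.target⟩ :: l.eraseP (·.source = j))
        else none

/-- The arcs after the darts `i` and `j` are joined to an edge, which is crossed in both
directions. -/
def glue (f i j : ℕ) (l : List Arc) : Option (List Arc) :=
  (fuse f j i l).bind (fuse f i j)

theorem exists_find?_eq_some_perm {γ : Type*} {p : γ → Bool} {l : List γ} (h : ∃ x ∈ l, p x) :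
    ∃ x r, l.find? p = some x ∧ l.eraseP p = r ∧ p x ∧ l.Perm (x :: r) := by
  obtain ⟨y, hy, hpy⟩ := h
  obtain ⟨x, l₁, l₂, hl₁, hx, rfl, herase⟩ := List.exists_of_eraseP hy hpy
  refine ⟨x, _, ?_, herase, hx, List.perm_middle⟩
  rw [List.find?_append, List.find?_eq_none.2 hl₁, Option.none_or, List.find?_cons_of_pos hx]

section Arcs
variable {α : Type*} {f : ℕ} {a b : α → α} {θ : ℕ → α} {G : Set α}

/-- The arc `A` is realized in a map with face permutation `b ∘ a`, for the labelling `θ` of the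
darts, and the edges that it crosses belong to the set `G` of darts with known edges. -/
structure Arc.IsTrace (f : ℕ) (a b : α → α) (θ : ℕ → α) (G : Set α) (A : Arc) : Prop where
  lt : A.crossings < f
  iterate_eq : (b ∘ a)^[A.crossings] (b (θ A.source)) = θ A.target
  interior : ∀ k < A.crossings, (b ∘ a)^[k] (b (θ A.source)) ∈ G

theorem Arc.IsTrace.congr {θ' : ℕ → α} {A : Arc} (hA : A.IsTrace f a b θ G)
    (hsource : θ' A.source = θ A.source) (htarget : θ' A.target = θ A.target) :
    A.IsTrace f a b θ' G :=
  ⟨hA.lt, by rw [hsource, htarget, hA.iterate_eq], by simpa only [hsource] using hA.interior⟩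

theorem Arc.IsTrace.crossings_add_one_eq {A : Arc} (hA : A.IsTrace f a b θ G)
    (hface : ∀ x, minimalPeriod (b ∘ a) x = f) (ha : a (θ A.target) = θ A.source) :
    A.crossings + 1 = f := by
  have hper : IsPeriodicPt (b ∘ a) (A.crossings + 1) (b (θ A.source)) := by
    rw [IsPeriodicPt, IsFixedPt, iterate_succ_apply', hA.iterate_eq, comp_apply, ha]
  exact (Nat.succ_le_of_lt hA.lt).antisymm
    (Nat.le_of_dvd (Nat.succ_pos _) (hface (b (θ A.source)) ▸ hper.minimalPeriod_dvd))

theorem Arc.IsTrace.join {A B : Arc} (hA : A.IsTrace f a b θ G) (hB : B.IsTrace f a b θ G)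
    (hface : ∀ x, minimalPeriod (b ∘ a) x = f) (hb : Injective b)
    (ha : a (θ A.target) = θ B.source)
    (havoid : ∀ y ∈ insert (θ A.target) G, a y ≠ θ A.source) :
    Arc.IsTrace f a b θ (insert (θ A.target) G)
      ⟨A.source, A.crossings + B.crossings + 1, B.target⟩ := by
  have hiter (k : ℕ) : (b ∘ a)^[k + (A.crossings + 1)] (b (θ A.source)) =
      (b ∘ a)^[k] (b (θ B.source)) := by
    rw [iterate_add_apply, iterate_succ_apply', hA.iterate_eq, comp_apply, ha]
  have hinterior (k : ℕ) (hk : k < A.crossings + B.crossings + 1) :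
      (b ∘ a)^[k] (b (θ A.source)) ∈ insert (θ A.target) G := by
    rcases lt_trichotomy k A.crossings with hkA | rfl | hkA
    · exact .inr (hA.interior k hkA)
    · exact .inl hA.iterate_eq
    · obtain ⟨k, rfl⟩ := Nat.exists_eq_add_of_le' (Nat.succ_le_of_lt hkA)
      exact .inr (hiter k ▸ hB.interior k (by omega))
  refine ⟨?_, ?_, hinterior⟩
  · -- After `f` steps the face is back at its start, so a known edge would end at `θ A.source`.
    by_contra! hlong
    obtain ⟨k, rfl⟩ := Nat.exists_eq_add_of_lt hA.lt.pos
    refine havoid _ (hinterior k (by simp only at hlong; omega)) (hb ?_)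
    have hx := iterate_minimalPeriod (f := b ∘ a) (x := b (θ A.source))
    rwa [hface, zero_add, iterate_succ_apply'] at hx
  · rw [show A.crossings + B.crossings + 1 = B.crossings + (A.crossings + 1) by omega, hiter,
      hB.iterate_eq]

/-- The arcs `l` are realized in a map, start at distinct darts, and no edge known in `G` ends at
one of these. -/
structure IsArcSystem (f : ℕ) (a b : α → α) (θ : ℕ → α) (G : Set α) (l : List Arc) : Prop where
  nodup : (l.map Arc.source).Nodup
  injOn : InjOn θ {s | s ∈ l.map Arc.source}
  avoid : ∀ y ∈ G, ∀ s ∈ l.map Arc.source, a y ≠ θ s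
  isTrace : ∀ A ∈ l, A.IsTrace f a b θ G

variable {l : List Arc} {i j : ℕ}

theorem IsArcSystem.avoid_insert (h : IsArcSystem f a b θ G l) (hj : j ∈ l.map Arc.source)
    (ha : a (θ i) = θ j) :
    ∀ y ∈ insert (θ i) G, ∀ s ∈ l.map Arc.source, s ≠ j → a y ≠ θ s := by
  rintro y (rfl | hy) s hs hsj
  exacts [fun hys => hsj (h.injOn hs hj (hys.symm.trans ha)), h.avoid y hy s hs]

theorem IsArcSystem.of_perm_cons {l' : List Arc} (h : IsArcSystem f a b θ G l)
    (ha : a (θ i) = θ j) (hl' : (l.map Arc.source).Perm (j :: l'.map Arc.source))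
    (htrace : ∀ A ∈ l', A.IsTrace f a b θ (insert (θ i) G)) :
    IsArcSystem f a b θ (insert (θ i) G) l' := by
  obtain ⟨hjl', hnodup⟩ := List.nodup_cons.1 (hl'.nodup_iff.1 h.nodup)
  have hmem {s} (hs : s ∈ l'.map Arc.source) : s ∈ l.map Arc.source := hl'.mem_iff.2 (.tail _ hs)
  exact ⟨hnodup, h.injOn.mono fun s => hmem, fun y hy s hs =>
    h.avoid_insert (hl'.mem_iff.2 (.head _)) ha y hy s (hmem hs) (ne_of_mem_of_not_mem hs hjl'),
    htrace⟩

theorem IsArcSystem.exists_fuse (h : IsArcSystem f a b θ G l)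
    (hface : ∀ x, minimalPeriod (b ∘ a) x = f) (hb : Injective b)
    (hi : i ∈ l.map Arc.target) (hj : j ∈ l.map Arc.source) (ha : a (θ i) = θ j) :
    ∃ l', fuse f i j l = some l' ∧ (l.map Arc.source).Perm (j :: l'.map Arc.source) ∧
      (l.map Arc.target).Perm (i :: l'.map Arc.target) ∧
      IsArcSystem f a b θ (insert (θ i) G) l' := by
  have hmono {A : Arc} (hA : A ∈ l) : A.IsTrace f a b θ (insert (θ i) G) :=
    have hA := h.isTrace A hA
    ⟨hA.lt, hA.iterate_eq, fun k hk => .inr (hA.interior k hk)⟩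
  obtain ⟨A, r, hfindA, heraseA, hAi, hA⟩ :=
    exists_find?_eq_some_perm (p := fun A : Arc => A.target = i) (by simpa using hi)
  obtain rfl : A.target = i := of_decide_eq_true hAi
  have hAl : A ∈ l := hA.mem_iff.2 (.head _)
  by_cases hAj : A.source = j
  · obtain rfl := hAj
    have hclose := (h.isTrace A hAl).crossings_add_one_eq hface ha
    exact ⟨r, by simp [fuse, hfindA, heraseA, hclose], hA.map Arc.source, hA.map Arc.target,
      h.of_perm_cons ha (hA.map Arc.source) fun B hB => hmono (hA.mem_iff.2 (.tail _ hB))⟩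
  · obtain ⟨B, r', hfindB, heraseB, hBj, hB⟩ :=
      exists_find?_eq_some_perm (p := fun B : Arc => B.source = j) (l := r)
        (by simpa using List.mem_of_ne_of_mem (Ne.symm hAj) ((hA.map Arc.source).mem_iff.1 hj))
    obtain rfl : B.source = j := of_decide_eq_true hBj
    have hAB := hA.trans (hB.cons A)
    have hsource : (l.map Arc.source).Perm (B.source :: A.source :: r'.map Arc.source) :=
      (hAB.map Arc.source).trans (.swap _ _ _)
    have hjoin := (h.isTrace A hAl).join (h.isTrace B (hAB.mem_iff.2 (.tail _ (.head _)))) hface hb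
      ha fun y hy => h.avoid_insert hj ha y hy _ (List.mem_map_of_mem hAl) hAj
    refine ⟨⟨A.source, A.crossings + B.crossings + 1, B.target⟩ :: r',
      by simp [fuse, hfindA, heraseA, hAj, hfindB, heraseB, hjoin.lt], hsource, hAB.map Arc.target,
      h.of_perm_cons ha hsource ?_⟩
    rintro C (_ | ⟨_, hC⟩)
    exacts [hjoin, hmono (hAB.mem_iff.2 (.tail _ (.tail _ hC)))]

theorem IsArcSystem.exists_glue (h : IsArcSystem f a b θ G l)
    (hface : ∀ x, minimalPeriod (b ∘ a) x = f) (hb : Injective b)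
    (hperm : (l.map Arc.target).Perm (l.map Arc.source)) (hij : i ≠ j)
    (hi : i ∈ l.map Arc.source) (hj : j ∈ l.map Arc.source)
    (hai : a (θ i) = θ j) (haj : a (θ j) = θ i) :
    ∃ l', glue f i j l = some l' ∧ (l.map Arc.source).Perm (i :: j :: l'.map Arc.source) ∧
      (l'.map Arc.target).Perm (l'.map Arc.source) ∧
      IsArcSystem f a b θ (insert (θ i) (insert (θ j) G)) l' := by
  obtain ⟨l₁, hfuse₁, hs₁, ht₁, h₁⟩ := h.exists_fuse hface hb (hperm.mem_iff.2 hj) hi haj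
  have hj₁ : j ∈ l₁.map Arc.source := List.mem_of_ne_of_mem hij.symm (hs₁.mem_iff.1 hj)
  have hi₁ : i ∈ l₁.map Arc.target :=
    List.mem_of_ne_of_mem hij (ht₁.mem_iff.1 (hperm.mem_iff.2 hi))
  obtain ⟨l', hfuse', hs', ht', h'⟩ := h₁.exists_fuse hface hb hi₁ hj₁ hai
  have hs := hs₁.trans (hs'.cons i)
  refine ⟨l', by rw [glue, hfuse₁, Option.bind_some, hfuse'], hs, ?_, h'⟩
  have ht := (ht₁.trans (ht'.cons j)).symm.trans (hperm.trans hs)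
  exact (ht.trans (.swap _ _ _)).cons_inv.cons_inv

end Arcs

/-! ### Exploring a map from a root -/

section Exploration
variable {α : Type*} {d f : ℕ} {a b : α → α} {φ : Labelling α} {l : List Arc} {i j : ℕ}

/-- The labelled darts at which no arc starts, that is, those whose edge is known. -/
def glued (d : ℕ) (b : α → α) (φ : Labelling α) (l : List Arc) : Set α :=
  φ.dart d b '' (Iio (φ.count * d) \ {s | s ∈ l.map Arc.source})

theorem glued_of_perm {l' : List Arc} (hnodup : (l.map Arc.source).Nodup)
    (hl : (l.map Arc.source).Perm (i :: j :: l'.map Arc.source))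
    (hi : i < φ.count * d) (hj : j < φ.count * d) :
    glued d b φ l' = insert (φ.dart d b i) (insert (φ.dart d b j) (glued d b φ l)) := by
  have hnodup' := hl.nodup_iff.1 hnodup
  rw [glued, glued, ← image_insert_eq, ← image_insert_eq]
  congr 1
  ext s
  simp only [mem_sdiff, mem_Iio, mem_ofPred_eq, mem_insert_iff, hl.mem_iff, List.mem_cons]
  simp only [List.nodup_cons, List.mem_cons] at hnodup'
  grind

/-- The labelling `φ` and the arcs `l` describe a partially explored map: the darts where arcs start
are those without a known edge, and each of them is also the end of exactly one arc. -/
structure IsExploration (d f : ℕ) (a b : α → α) (φ : Labelling α) (l : List Arc) : Prop where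
  injOn : InjOn (φ.dart d b) (Iio (φ.count * d))
  source_lt : ∀ s ∈ l.map Arc.source, s < φ.count * d
  nodup : (l.map Arc.source).Nodup
  perm : (l.map Arc.target).Perm (l.map Arc.source)
  mapsTo : MapsTo a (glued d b φ l) (glued d b φ l)
  isTrace : ∀ A ∈ l, A.IsTrace f a b (φ.dart d b) (glued d b φ l)

theorem IsExploration.isArcSystem (h : IsExploration d f a b φ l) :
    IsArcSystem f a b (φ.dart d b) (glued d b φ l) l := by
  refine ⟨h.nodup, h.injOn.mono h.source_lt, fun y hy s hs hys => ?_, h.isTrace⟩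
  obtain ⟨s', ⟨hlt, hs'⟩, heq⟩ := h.mapsTo hy
  exact hs' (h.injOn hlt (h.source_lt s hs) (heq.trans hys) ▸ hs)

theorem IsExploration.exists_glue (h : IsExploration d f a b φ l) (hmap : IsUniformMap d f a b)
    (hd : 0 < d) (hi : i ∈ l.map Arc.source) (hj : j ∈ l.map Arc.source)
    (ha : a (φ.dart d b i) = φ.dart d b j) :
    ∃ l', glue f i j l = some l' ∧ IsExploration d f a b φ l' := by
  have ha' : a (φ.dart d b j) = φ.dart d b i := ha ▸ hmap.involutive _
  have hij : i ≠ j := fun hij => hmap.apply_ne _ (hij ▸ ha)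
  obtain ⟨l', hglue, hsource, hperm, hsystem⟩ := h.isArcSystem.exists_glue hmap.face
    (hmap.injective_vertex hd) h.perm hij hi hj ha ha'
  have hglued := glued_of_perm (b := b) h.nodup hsource (h.source_lt i hi) (h.source_lt j hj)
  rw [← hglued] at hsystem
  refine ⟨l', hglue, h.injOn, fun s hs => h.source_lt s ?_, hsystem.nodup, hperm, ?_,
    hsystem.isTrace⟩
  · exact hsource.mem_iff.2 (.tail _ (.tail _ hs))
  · rw [hglued]
    rintro _ (rfl | rfl | hy)
    exacts [ha ▸ .inr (.inl rfl), ha' ▸ .inl rfl, .inr (.inr (h.mapsTo hy))]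

theorem mapsTo_image_dart (hb : ∀ x, minimalPeriod b x = d) (hd : 0 < d) (φ : Labelling α) :
    MapsTo b (φ.dart d b '' Iio (φ.count * d)) (φ.dart d b '' Iio (φ.count * d)) := by
  rintro _ ⟨l, hl, rfl⟩
  refine ⟨rotation d l, ?_, (φ.apply_dart hb hd l).symm⟩
  rw [mem_Iio, ← Nat.div_lt_iff_lt_mul hd] at hl ⊢
  rwa [rotation_div hd]

theorem injOn_dart_push (hb : ∀ x, minimalPeriod b x = d) (hd : 0 < d)
    (hφ : InjOn (φ.dart d b) (Iio (φ.count * d))) {x : α}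
    (hx : x ∉ φ.dart d b '' Iio (φ.count * d)) :
    InjOn ((φ.push x).dart d b) (Iio ((φ.push x).count * d)) := by
  have hnew {e : ℕ} (he : e < d) : b^[e] x ∉ φ.dart d b '' Iio (φ.count * d) := fun hmem => by
    have hback := (mapsTo_image_dart hb hd φ).iterate (d - e) hmem
    rw [← iterate_add_apply, Nat.sub_add_cancel he.le, ← hb x, iterate_minimalPeriod, hb] at hback
    exact hx hback
  have hsplit {l : ℕ} (hl : l < (φ.push x).count * d) (hlt : ¬l < φ.count * d) :
      ∃ e < d, l = φ.count * d + e := by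
    rw [Labelling.push, Nat.succ_mul] at hl
    exact ⟨l - φ.count * d, by omega, by omega⟩
  intro l₁ hl₁ l₂ hl₂ heq
  by_cases h₁ : l₁ < φ.count * d <;> by_cases h₂ : l₂ < φ.count * d
  · rw [φ.dart_push_of_lt x h₁, φ.dart_push_of_lt x h₂] at heq
    exact hφ h₁ h₂ heq
  · obtain ⟨e, he, rfl⟩ := hsplit hl₂ h₂
    rw [φ.dart_push_of_lt x h₁, φ.dart_push_add x he] at heq
    exact (hnew he ⟨l₁, h₁, heq⟩).elim
  · obtain ⟨e, he, rfl⟩ := hsplit hl₁ h₁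
    rw [φ.dart_push_of_lt x h₂, φ.dart_push_add x he] at heq
    exact (hnew he ⟨l₂, h₂, heq.symm⟩).elim
  · obtain ⟨e₁, he₁, rfl⟩ := hsplit hl₁ h₁
    obtain ⟨e₂, he₂, rfl⟩ := hsplit hl₂ h₂
    rw [φ.dart_push_add x he₁, φ.dart_push_add x he₂] at heq
    rw [iterate_injOn_Iio_minimalPeriod ((hb x).symm ▸ he₁) ((hb x).symm ▸ he₂) heq]

theorem glued_push_append_vertexArcs (l : List Arc) (x : α) :
    glued d b (φ.push x) (l ++ vertexArcs d φ.count) = glued d b φ l := by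
  have hset : Iio ((φ.push x).count * d) \
      {s | s ∈ (l ++ vertexArcs d φ.count).map Arc.source} =
      Iio (φ.count * d) \ {s | s ∈ l.map Arc.source} := by
    ext s
    simp only [Labelling.push, Nat.succ_mul, List.map_append, map_source_vertexArcs,
      List.mem_append, mem_sdiff, mem_Iio, mem_ofPred_eq, List.mem_range'_1]
    grind
  rw [glued, glued, hset]
  exact image_congr fun s hs => φ.dart_push_of_lt x hs.1

theorem IsExploration.push (h : IsExploration d f a b φ l) (hb : ∀ x, minimalPeriod b x = d)
    (hd : 0 < d) (hf : 0 < f) {x : α} (hx : x ∉ φ.dart d b '' Iio (φ.count * d)) :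
    IsExploration d f a b (φ.push x) (l ++ vertexArcs d φ.count) := by
  have hcount : (φ.push x).count * d = φ.count * d + d := Nat.succ_mul _ _
  have hglued := glued_push_append_vertexArcs (d := d) (b := b) (φ := φ) l x
  refine ⟨injOn_dart_push hb hd h.injOn hx, ?_, ?_, ?_, hglued ▸ h.mapsTo, ?_⟩
  · intro s hs
    rw [List.map_append, map_source_vertexArcs, List.mem_append, List.mem_range'_1] at hs
    rcases hs with hs | hs
    · exact hcount ▸ (h.source_lt s hs).trans_le (Nat.le_add_right _ _)
    · exact hcount ▸ hs.2
  · rw [List.map_append, map_source_vertexArcs]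
    refine h.nodup.append List.nodup_range' fun s hs hs' => ?_
    exact (h.source_lt s hs).not_ge (List.mem_range'_1.1 hs').1
  · rw [List.map_append, List.map_append, map_source_vertexArcs]
    exact h.perm.append (map_target_vertexArcs_perm hd _)
  · intro A hA
    rw [hglued]
    rcases List.mem_append.1 hA with hA | hA
    · have hsource := h.source_lt _ (List.mem_map_of_mem hA)
      have htarget := h.source_lt _ (h.perm.mem_iff.1 (List.mem_map_of_mem hA))
      exact (h.isTrace A hA).congr (φ.dart_push_of_lt x hsource) (φ.dart_push_of_lt x htarget)
    · obtain ⟨s, -, rfl⟩ := List.mem_map.1 hA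
      exact ⟨hf, (φ.push x).apply_dart hb hd s, fun k hk => absurd hk (Nat.not_lt_zero k)⟩

theorem isExploration_rooted (hb : ∀ x, minimalPeriod b x = d) (hd : 0 < d) (hf : 0 < f) (x : α) :
    IsExploration d f a b (.rooted x) (vertexArcs d 0) := by
  have hempty : IsExploration d f a b ⟨0, fun _ => x⟩ [] := by
    constructor <;> simp [glued]
  have hpush : Labelling.rooted x = .push ⟨0, fun _ => x⟩ x := by
    simp [Labelling.push, Labelling.rooted]
  exact hpush ▸ hempty.push hb hd hf (by simp)

end Exploration

/-- The codes obtained from `v` labelled vertices and the open arcs `l` by always gluing the dart at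
which the first arc ends, either to an open dart or to a new vertex, as long as fewer than `n` darts
are used. At most `m` edges are glued; a smaller `m` than needed yields incomplete codes. -/
def search (d f n : ℕ) : ℕ → ℕ → List Arc → List Code
  | 0, _, _ => [[]]
  | _, _, [] => [[]]
  | m + 1, v, A :: l =>
    (((A :: l).map Arc.source).flatMap fun j =>
      (glue f A.target j (A :: l)).elim [] fun l' =>
        (search d f n m v l').map ((A.target, j) :: ·)) ++
    if v * d < n then
      (glue f A.target (v * d) (A :: l ++ vertexArcs d v)).elim [] fun l' =>
        (search d f n m (v + 1) l').map ((A.target, v * d) :: ·)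
    else []

section Search
open Labelling
variable {α : Type*} {d f : ℕ} {a b : α → α} {φ : Labelling α} {l : List Arc} {i j : ℕ}

theorem IsExploration.mem_source (h : IsExploration d f a b φ l) (hinv : Involutive a)
    (hi : i ∈ l.map Arc.source) (hj : j < φ.count * d)
    (ha : a (φ.dart d b i) = φ.dart d b j) : j ∈ l.map Arc.source := by
  by_contra hjl
  obtain ⟨s, ⟨hs, hsl⟩, heq⟩ := h.mapsTo ⟨j, ⟨hj, hjl⟩, rfl⟩
  rw [← ha, hinv] at heq
  exact hsl (h.injOn hs (h.source_lt i hi) heq ▸ hi)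

theorem IsExploration.count_mul_lt_card [Fintype α] (h : IsExploration d f a b φ l) {x : α}
    (hx : x ∉ φ.dart d b '' Iio (φ.count * d)) : φ.count * d < Fintype.card α := by
  rw [← Nat.card_eq_fintype_card, ← ncard_univ, ← ncard_Iio_nat (φ.count * d),
    ← h.injOn.ncard_image]
  exact ncard_lt_ncard (ssubset_univ_iff.2 fun huniv => hx (huniv ▸ mem_univ x))

variable [DecidableEq α]

theorem not_embedsAlong_push {x : α} {t : Code} (hd : 0 < d)
    (hx : x ∈ φ.dart d b '' Iio (φ.count * d)) : ¬EmbedsAlong d a b (φ.push x) t := by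
  obtain ⟨j, hj, rfl⟩ := hx
  intro ht
  rw [mem_Iio] at hj
  have hcount : (φ.push (φ.dart d b j)).count * d = φ.count * d + d := Nat.succ_mul _ _
  refine hj.ne (ht.injOn (mem_Iio.2 (by omega)) (mem_Iio.2 (by omega)) ?_)
  exact (dart_push_of_lt _ hj).trans (dart_push_add φ _ hd).symm

open Classical in
theorem countP_map_cons (hj : j ≠ φ.count * d) (L : List Code) :
    (L.map ((i, j) :: ·)).countP (EmbedsAlong d a b φ ·) =
      if a (φ.dart d b i) = φ.dart d b j then L.countP (EmbedsAlong d a b φ ·) else 0 := by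
  simp only [List.countP_map, Function.comp_def, embedsAlong_cons hj]
  split_ifs with hij <;> simp [hij]

open Classical in
theorem countP_map_cons_push (L : List Code) :
    (L.map ((i, φ.count * d) :: ·)).countP (EmbedsAlong d a b φ ·) =
      L.countP (EmbedsAlong d a b (φ.push (a (φ.dart d b i))) ·) := by
  simp only [List.countP_map, Function.comp_def, embedsAlong_cons_push]

open Classical in
theorem countP_elim_map_cons_eq_zero (hj : j ≠ φ.count * d)
    (ha : a (φ.dart d b i) ≠ φ.dart d b j) (o : Option (List Arc)) (g : List Arc → List Code) :
    (o.elim [] fun l' => (g l').map ((i, j) :: ·)).countP (EmbedsAlong d a b φ ·) = 0 := by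
  cases o with
  | none => rfl
  | some l' => rw [Option.elim_some, countP_map_cons hj, if_neg ha]

open Classical in
theorem IsExploration.countP_flatMap_glue (h : IsExploration d f a b φ l)
    (hmap : IsUniformMap d f a b) (hd : 0 < d) (hi : i ∈ l.map Arc.source)
    {g : List Arc → List Code}
    (hg : ∀ l', IsExploration d f a b φ l' → (g l').countP (EmbedsAlong d a b φ ·) = 1) :
    ((l.map Arc.source).flatMap fun j =>
      (glue f i j l).elim [] fun l' => (g l').map ((i, j) :: ·)).countP (EmbedsAlong d a b φ ·) =
      if a (φ.dart d b i) ∈ φ.dart d b '' Iio (φ.count * d) then 1 else 0 := by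
  have hne {s : ℕ} (hs : s ∈ l.map Arc.source) : s ≠ φ.count * d := (h.source_lt s hs).ne
  split_ifs with hx
  · obtain ⟨j, hjlt, hj⟩ := hx
    have hjl := h.mem_source hmap.involutive hi hjlt hj.symm
    obtain ⟨l', hglue, hl'⟩ := h.exists_glue hmap hd hi hjl hj.symm
    refine countP_flatMap_eq_one h.nodup hjl ?_ fun s hs hsj =>
      countP_elim_map_cons_eq_zero (hne hs) (fun has => hsj ?_) _ _
    · rw [hglue, Option.elim_some, countP_map_cons (hne hjl), if_pos hj.symm, hg l' hl']
    · exact h.injOn (h.source_lt s hs) hjlt (has.symm.trans hj.symm)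
  · rw [List.countP_flatMap, List.sum_eq_zero_iff]
    intro c hc
    obtain ⟨s, hs, rfl⟩ := List.mem_map.1 hc
    refine countP_elim_map_cons_eq_zero (hne hs) (fun has => hx ?_) _ _
    exact ⟨s, h.source_lt s hs, has.symm⟩

open Classical in
theorem IsExploration.countP_elim_glue_push [Fintype α] (h : IsExploration d f a b φ l)
    (hmap : IsUniformMap d f a b) (hd : 0 < d) (hf : 0 < f) (hi : i ∈ l.map Arc.source)
    {g : List Arc → List Code}
    (hg : ∀ l', IsExploration d f a b (φ.push (a (φ.dart d b i))) l' →
      (g l').countP (EmbedsAlong d a b (φ.push (a (φ.dart d b i))) ·) = 1) :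
    (if φ.count * d < Fintype.card α then
      (glue f i (φ.count * d) (l ++ vertexArcs d φ.count)).elim [] fun l' =>
        (g l').map ((i, φ.count * d) :: ·)
      else []).countP (EmbedsAlong d a b φ ·) =
      if a (φ.dart d b i) ∈ φ.dart d b '' Iio (φ.count * d) then 0 else 1 := by
  by_cases hx : a (φ.dart d b i) ∈ φ.dart d b '' Iio (φ.count * d)
  · rw [if_pos hx]
    split_ifs with hlt
    · cases glue f i (φ.count * d) (l ++ vertexArcs d φ.count) with
      | none => rfl
      | some l' =>
        rw [Option.elim_some, countP_map_cons_push, List.countP_eq_zero]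
        exact fun t _ => by simpa using not_embedsAlong_push hd hx
    · rfl
  · have hnew : (φ.push (a (φ.dart d b i))).dart d b (φ.count * d) = a (φ.dart d b i) :=
      dart_push_add φ _ hd
    obtain ⟨l', hglue, hl'⟩ := (h.push hmap.vertex hd hf hx).exists_glue hmap hd
      (i := i) (j := φ.count * d)
      (by rw [List.map_append]; exact List.mem_append_left _ hi)
      (by simp [map_source_vertexArcs, hd])
      (by rw [hnew, dart_push_of_lt _ (h.source_lt _ hi)])
    rw [if_pos (h.count_mul_lt_card hx), if_neg hx, hglue, Option.elim_some, countP_map_cons_push,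
      hg l' hl']

open Classical in
theorem countP_search [Fintype α] (hmap : IsUniformMap d f a b) (hd : 0 < d) (hf : 0 < f) (m : ℕ)
    (h : IsExploration d f a b φ l) :
    (search d f (Fintype.card α) m φ.count l).countP (EmbedsAlong d a b φ ·) = 1 := by
  induction m generalizing φ l with
  | zero => simp [search, embedsAlong_nil, h.injOn]
  | succ m ih =>
    cases l with
    | nil => simp [search, embedsAlong_nil, h.injOn]
    | cons A l =>
      have hi : A.target ∈ (A :: l).map Arc.source :=
        h.perm.mem_iff.1 (List.mem_map_of_mem (.head _))
      rw [search, List.countP_append, h.countP_flatMap_glue hmap hd hi fun l' => ih,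
        h.countP_elim_glue_push hmap hd hf hi (g := search d f _ m (φ.count + 1)) fun l' => ih]
      split_ifs <;> rfl

end Search

/-! ### Maps presented by codes -/

theorem minimalPeriod_eq_of_idxOf_iterate {α : Type*} [DecidableEq α] {g : α → α} {x : α} {f : ℕ}
    (h : (List.iterate g (g x) f).idxOf x + 1 = f) : minimalPeriod g x = f := by
  obtain ⟨k, rfl⟩ : ∃ k, f = k + 1 := ⟨_, h.symm⟩
  rw [Nat.add_right_cancel_iff, List.idxOf, List.findIdx_eq (by simp)] at h
  simp only [List.getElem_iterate, ← iterate_succ_apply, beq_iff_eq, beq_eq_false_iff_ne] at h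
  obtain ⟨hper, hne⟩ := h
  refine (Nat.le_of_dvd k.succ_pos (IsPeriodicPt.minimalPeriod_dvd hper)).antisymm ?_
  by_contra! hlt
  obtain ⟨j, hj⟩ := Nat.exists_eq_add_of_lt (IsPeriodicPt.minimalPeriod_pos k.succ_pos hper)
  rw [zero_add] at hj
  have hx := iterate_minimalPeriod (f := g) (x := x)
  exact hne j (by omega) (by rwa [hj] at hx)

/-- Each edge of the code starts at a label in use when `v` vertices are labelled at the beginning,
ends at such a label or at the first unused one, and in the end exactly `n` labels are in use. -/
def WellFormed (d n : ℕ) : ℕ → Code → Prop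
  | v, [] => v * d = n
  | v, (i, j) :: t => i < v * d ∧ j ≤ v * d ∧ WellFormed d n (if j = v * d then v + 1 else v) t

instance decidableWellFormed (d n : ℕ) : ∀ v t, Decidable (WellFormed d n v t)
  | v, [] => inferInstanceAs (Decidable (v * d = n))
  | v, (i, j) :: t =>
    have := decidableWellFormed d n (if j = v * d then v + 1 else v) t
    inferInstanceAs (Decidable (i < v * d ∧ j ≤ v * d ∧ _))

theorem WellFormed.dvd {d n v : ℕ} {t : Code} (h : WellFormed d n v t) : d ∣ n := by
  induction t generalizing v with
  | nil => exact ⟨v, h ▸ mul_comm v d⟩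
  | cons e t ih => exact ih h.2.2

theorem WellFormed.follow_spec {α : Type*} [DecidableEq α] {d n : ℕ} {a b : α → α}
    {φ ψ : Labelling α} {t : Code} (ht : WellFormed d n φ.count t) (hd : 0 < d)
    (h : φ.follow d a b t = some ψ) :
    ψ.count * d = n ∧ ∀ e ∈ t, a (ψ.dart d b e.1) = ψ.dart d b e.2 := by
  induction t generalizing φ with
  | nil => exact ⟨Option.some.inj h ▸ ht, by simp⟩
  | cons e t ih =>
    obtain ⟨i, j⟩ := e
    obtain ⟨hi, hj, ht⟩ := ht
    rw [Labelling.follow] at h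
    split_ifs at h with hnew hij
    · rw [if_pos hnew] at ht
      obtain ⟨hcount, hedge⟩ := ih ht h
      refine ⟨hcount, List.forall_mem_cons.2 ⟨?_, hedge⟩⟩
      have hlt : j < (φ.push (a (φ.dart d b i))).count * d := by
        rw [Labelling.push, Nat.succ_mul]; omega
      rw [Labelling.dart_of_follow h (by omega), Labelling.dart_of_follow h hlt,
        Labelling.dart_push_of_lt _ hi, hnew]
      exact (Labelling.dart_push_add φ _ hd).symm
    · rw [if_neg hnew] at ht
      obtain ⟨hcount, hedge⟩ := ih ht h
      refine ⟨hcount, List.forall_mem_cons.2 ⟨?_, hedge⟩⟩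
      rwa [Labelling.dart_of_follow h hi, Labelling.dart_of_follow h (by omega)]

/-- The code `t`, read on the labels `0, …, n - 1`, is the list of edges of a uniform map with edge
involution `a`. Connectedness holds because each label can be lowered by `a` or by turning back
about its vertex; the last condition says that the face of `x` first returns to `x` after `f`
steps. -/
def Presents (d f n : ℕ) (t : Code) (a : ℕ → ℕ) : Prop :=
  WellFormed d n 1 t ∧ ∀ x < n, a x < n ∧ a x ≠ x ∧ a (a x) = x ∧ ((x, a x) ∈ t ∨ (a x, x) ∈ t) ∧
    (x = 0 ∨ x % d ≠ 0 ∨ a x < x) ∧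
    (List.iterate (rotation d ∘ a) (rotation d (a x)) f).idxOf x + 1 = f

instance (d f n : ℕ) (t : Code) (a : ℕ → ℕ) : Decidable (Presents d f n t a) :=
  inferInstanceAs (Decidable (_ ∧ _))

theorem rotation_lt {d n x : ℕ} (hd : 0 < d) (hdn : d ∣ n) (hx : x < n) : rotation d x < n := by
  obtain ⟨q, rfl⟩ := hdn
  rw [mul_comm, ← Nat.div_lt_iff_lt_mul hd] at hx ⊢
  rwa [rotation_div hd]

theorem rotation_sub_one {d x : ℕ} (hd : 0 < d) (hx : x % d ≠ 0) : rotation d (x - 1) = x := by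
  have hdecomp := Nat.div_add_mod' x d
  have hmod := Nat.mod_lt x hd
  have hdiv : (x - 1) / d = x / d := by
    rw [show x - 1 = x / d * d + (x % d - 1) by omega, mul_add_div_of_lt (by omega)]
  rw [rotation, strictly_eq, hdiv, Nat.sub_add_cancel (by omega), hdecomp]

namespace Presents
variable {d f n : ℕ} {t : Code} {a : ℕ → ℕ}

theorem eq_univ_of_mapsTo (h : Presents d f n t a) (hd : 0 < d) {σ τ : Perm (Fin n)}
    (hσ : ∀ x, (σ x : ℕ) = a x) (hτ : ∀ x, (τ x : ℕ) = rotation d x) {s : Set (Fin n)}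
    (hs : s.Nonempty) (hσs : MapsTo σ s s) (hτs : MapsTo τ s s) : s = univ := by
  have hiff {π : Perm (Fin n)} (hπ : MapsTo π s s) (x : Fin n) : π x ∈ s ↔ x ∈ s := by
    have himage : π '' s = s :=
      eq_of_subset_of_ncard_le hπ.image_subset (ncard_image_of_injective s π.injective).ge
    simpa only [himage] using π.injective.mem_set_image (s := s) (a := x)
  obtain ⟨y, hy⟩ := hs
  have hzero (x : ℕ) (hx : x < n) : (⟨x, hx⟩ : Fin n) ∈ s ↔ (⟨0, y.pos⟩ : Fin n) ∈ s := by
    induction x using Nat.strong_induction_on with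
    | _ x ih =>
      obtain ⟨-, -, -, -, rfl | hmod | hlt, -⟩ := h.2 x hx
      · rfl
      · have hpos : 0 < x := Nat.pos_of_ne_zero fun h0 => hmod (by simp [h0])
        rw [← ih (x - 1) (by omega) (by omega), ← hiff hτs ⟨x - 1, _⟩]
        congr!
        rw [hτ, rotation_sub_one hd hmod]
      · rw [← ih (a x) hlt (by omega), ← hiff hσs]
        congr!
        exact hσ _
  exact eq_univ_of_forall fun x => (hzero x x.2).2 ((hzero y y.2).1 hy)

theorem exists_perm (h : Presents d f n t a) (hd : 0 < d) :
    ∃ σ τ : Perm (Fin n), (∀ x, (σ x : ℕ) = a x) ∧ (∀ x, (τ x : ℕ) = rotation d x) ∧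
      IsUniformMap d f σ τ := by
  let σ : Perm (Fin n) := Involutive.toPerm (fun x => ⟨a x, (h.2 x x.2).1⟩) fun x =>
    Fin.ext (h.2 x x.2).2.2.1
  let rot : Fin n → Fin n := fun x => ⟨rotation d x, rotation_lt hd h.1.dvd x.2⟩
  have hrot (x : Fin n) : minimalPeriod rot x = d := by
    rw [← minimalPeriod_eq_of_semiconj (g := rotation d) Fin.val_injective (fun _ => rfl),
      minimalPeriod_rotation hd]
  let τ : Perm (Fin n) :=
    .ofBijective rot (bijective_of_minimalPeriod_pos fun x => (hrot x).symm ▸ hd)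
  refine ⟨σ, τ, fun _ => rfl, fun _ => rfl, fun x => ?_, hrot, fun x => ?_, fun s hs hσs hτs =>
    h.eq_univ_of_mapsTo hd (fun _ => rfl) (fun _ => rfl) hs hσs hτs⟩
  · refine minimalPeriod_eq_prime (Fin.ext (h.2 x x.2).2.2.1) fun hx => ?_
    exact (h.2 x x.2).2.1 (congrArg Fin.val hx)
  · rw [← minimalPeriod_eq_of_semiconj (g := rotation d ∘ a) Fin.val_injective (fun _ => rfl)]
    exact minimalPeriod_eq_of_idxOf_iterate (h.2 x x.2).2.2.2.2.2

variable {β : Type*} [Fintype β] [DecidableEq β] {a' b' : β → β} {x : β} {ψ : Labelling β}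

theorem exists_equiv (h : Presents d f n t a) (hd : 0 < d) (hmap : IsUniformMap d f a' b')
    (hn : Fintype.card β = n) (hψ : Labelling.follow d a' b' (.rooted x) t = some ψ) :
    ψ.count * d = n ∧ ∃ e : Fin n ≃ β, (∀ l : Fin n, e l = ψ.dart d b' l) ∧
      ∀ l < n, a' (ψ.dart d b' l) = ψ.dart d b' (a l) := by
  obtain ⟨hcount, hedge⟩ := WellFormed.follow_spec (φ := .rooted x) h.1 hd hψ
  have ha (l : ℕ) (hl : l < n) : a' (ψ.dart d b' l) = ψ.dart d b' (a l) := by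
    rcases (h.2 l hl).2.2.2.1 with hmem | hmem
    · exact hedge _ hmem
    · rw [← hedge _ hmem, hmap.involutive]
  let e (l : Fin n) : β := ψ.dart d b' l
  have hsurj : Surjective e := by
    rw [← range_eq_univ]
    have hne : Nonempty (Fin n) := Fin.pos_iff_nonempty.1 (hn ▸ Fintype.card_pos_iff.2 ⟨x⟩)
    refine hmap.connected _ (range_nonempty e) ?_ ?_
    · rintro _ ⟨l, rfl⟩
      exact ⟨⟨a l, (h.2 l l.2).1⟩, (ha l l.2).symm⟩
    · rintro _ ⟨l, rfl⟩
      exact ⟨⟨rotation d l, rotation_lt hd h.1.dvd l.2⟩, (ψ.apply_dart hmap.vertex hd l).symm⟩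
  have hbij : Bijective e := (Fintype.bijective_iff_surjective_and_card e).2 ⟨hsurj, by simp [hn]⟩
  exact ⟨hcount, .ofBijective e hbij, fun _ => rfl, ha⟩

theorem embedsAlong_iff (h : Presents d f n t a) (hd : 0 < d) (hmap : IsUniformMap d f a' b')
    (hn : Fintype.card β = n) :
    Labelling.EmbedsAlong d a' b' (.rooted x) t ↔
      (Labelling.follow d a' b' (.rooted x) t).isSome := by
  rw [Option.isSome_iff_exists]
  refine ⟨fun ⟨ψ, hψ, _⟩ => ⟨ψ, hψ⟩, fun ⟨ψ, hψ⟩ => ⟨ψ, hψ, ?_⟩⟩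
  obtain ⟨hcount, e, he, -⟩ := h.exists_equiv hd hmap hn hψ
  intro l₁ hl₁ l₂ hl₂ heq
  rw [hcount] at hl₁ hl₂
  have : e ⟨l₁, hl₁⟩ = e ⟨l₂, hl₂⟩ := by rw [he, he, heq]
  exact congrArg Fin.val (e.injective this)

theorem exists_conj (h : Presents d f n t a) (hd : 0 < d) {σ τ σ' τ' : Perm (Fin n)}
    (hσ : ∀ x, (σ x : ℕ) = a x) (hτ : ∀ x, (τ x : ℕ) = rotation d x)
    (hmap : IsUniformMap d f σ' τ') {x : Fin n}
    (hx : (Labelling.follow d σ' τ' (.rooted x) t).isSome) :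
    ∃ π : Perm (Fin n), σ' = π * σ * π⁻¹ ∧ τ' = π * τ * π⁻¹ := by
  obtain ⟨ψ, hψ⟩ := Option.isSome_iff_exists.1 hx
  obtain ⟨-, π, hπ, ha⟩ := h.exists_equiv hd hmap (Fintype.card_fin n) hψ
  refine ⟨π, eq_mul_inv_of_mul_eq (Perm.ext fun l => ?_),
    eq_mul_inv_of_mul_eq (Perm.ext fun l => ?_)⟩
  · rw [Perm.mul_apply, Perm.mul_apply, hπ, hπ, ha l l.2, hσ]
  · rw [Perm.mul_apply, Perm.mul_apply, hπ, hπ, hτ, ψ.apply_dart hmap.vertex hd]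

end Presents

/-! ### Counting classes of uniform maps -/

/-- The edge involution of the code, as the base-`n` digits of a single number. -/
def table (n : ℕ) (t : Code) : ℕ := (t.map fun e => e.2 * n ^ e.1 + e.1 * n ^ e.2).sum

/-- The edge involution encoded by the digits of `T`. -/
def partner (n T x : ℕ) : ℕ := strictly x fun x => T / n ^ x % n

/-- The number of roots among the labels `0, …, n - 1` from which the code can be followed in the
map that it presents: the order of the automorphism group of the map. -/
def rootCount (d n : ℕ) (t : Code) (a : ℕ → ℕ) : ℕ :=
  Nat.count (fun r => (Labelling.follow d a (rotation d) (.rooted r) t).isSome) n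

/-- The sum of all root counts, provided that each code presents a uniform map. -/
def tally (d f n : ℕ) : List Code → Option ℕ
  | [] => some 0
  | t :: L => strictly (table n t) fun T =>
    if Presents d f n t (partner n T) then
      (tally d f n L).map (rootCount d n t (partner n T) + ·)
    else none

theorem tally_eq_some {d f n s : ℕ} {L : List Code} (h : tally d f n L = some s) :
    (∀ t ∈ L, Presents d f n t (partner n (table n t))) ∧
      (L.map fun t => rootCount d n t (partner n (table n t))).sum = s := by
  induction L generalizing s with
  | nil => exact ⟨by simp, Option.some.inj h⟩
  | cons t L ih =>
    rw [tally, strictly_eq] at h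
    split_ifs at h with ht
    obtain ⟨s', hs', rfl⟩ := Option.map_eq_some_iff.1 h
    obtain ⟨hL, hsum⟩ := ih hs'
    exact ⟨List.forall_mem_cons.2 ⟨ht, hL⟩, by rw [List.map_cons, List.sum_cons, hsum]⟩

theorem card_fin_subtype (p : ℕ → Prop) [DecidablePred p] (n : ℕ) :
    Nat.card {x : Fin n // p x} = Nat.count p n := by
  rw [Nat.card_eq_fintype_card, Fintype.card_subtype, Finset.card_filter,
    Fin.sum_univ_eq_sum_range fun x => if p x then 1 else 0, ← Finset.card_filter,
    Nat.count_eq_card_filter_range]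

/-- The monodromy pairs of uniform maps with vertex valency `d`, face length `f` and `n` darts. -/
abbrev UniformPair (d f n : ℕ) : Type :=
  {p : Perm (Fin n) × Perm (Fin n) // IsUniformMap d f p.1 p.2}

/-- Simultaneous conjugacy of monodromy pairs. -/
def SimConj {d f n : ℕ} (p q : UniformPair d f n) : Prop :=
  ∃ π : Perm (Fin n), q.1.1 = π * p.1.1 * π⁻¹ ∧ q.1.2 = π * p.1.2 * π⁻¹

/-- The code `t` can be followed in the map of `p` from the root `x`. -/
def Follows {d f n : ℕ} (p : UniformPair d f n) (x : Fin n) (t : Code) : Prop :=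
  (Labelling.follow d p.1.1 p.1.2 (.rooted x) t).isSome

section Count
variable {d f n : ℕ}

theorem isSome_follow_rooted {α β : Type*} [DecidableEq α] [DecidableEq β] {a b : α → α}
    {a' b' : β → β} {h : α → β} (hh : Injective h) (ha : Semiconj h a a') (hb : Semiconj h b b')
    (x : α) (t : Code) :
    (Labelling.follow d a' b' (.rooted (h x)) t).isSome ↔
      (Labelling.follow d a b (.rooted x) t).isSome := by
  rw [← Option.isSome_map (f := Labelling.map h), ← Labelling.follow_map hh ha hb]
  rfl

theorem SimConj.card_follows {p q : UniformPair d f n} (h : SimConj p q) (t : Code) :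
    Nat.card {x // Follows p x t} = Nat.card {x // Follows q x t} := by
  obtain ⟨π, hσ, hτ⟩ := h
  refine Nat.card_congr (π.subtypeEquiv fun x => ?_)
  rw [Follows, Follows, hσ, hτ]
  exact (isSome_follow_rooted π.injective (fun y => by simp) (fun y => by simp) x t).symm

open Classical in
theorem countP_search_follows (hd : 0 < d) (hf : 0 < f) {m : ℕ}
    (hL : ∀ t ∈ search d f n m 1 (vertexArcs d 0), ∃ a, Presents d f n t a)
    (p : UniformPair d f n) (x : Fin n) :
    (search d f n m 1 (vertexArcs d 0)).countP (Follows p x ·) = 1 := by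
  have hcount := countP_search p.2 hd hf m (isExploration_rooted p.2.vertex hd hf x)
  rw [Fintype.card_fin] at hcount
  refine (List.countP_congr fun t ht => ?_).trans hcount
  obtain ⟨a, ha⟩ := hL t ht
  simp only [decide_eq_true_eq]
  exact (ha.embedsAlong_iff hd p.2 (Fintype.card_fin n)).symm

theorem card_quot_simConj_mul {m s : ℕ} (hd : 0 < d) (hf : 0 < f)
    (h : tally d f n (search d f n m 1 (vertexArcs d 0)) = some s) :
    Nat.card (Quot (@SimConj d f n)) * n = s := by
  obtain ⟨hL, rfl⟩ := tally_eq_some h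
  have := card_quot_mul_card (r := @SimConj d f n) (F := Follows)
    (g := fun t => rootCount d n t (partner n (table n t)))
    (fun p q t hpq => hpq.card_follows t)
    (countP_search_follows hd hf fun t ht => ⟨_, hL t ht⟩) fun t ht => ?_
  · rwa [Fintype.card_fin] at this
  obtain ⟨σ, τ, hσ, hτ, hmap⟩ := (hL t ht).exists_perm hd
  refine ⟨⟨(σ, τ), hmap⟩, fun q x hx => ?_, ?_⟩
  · exact (Quot.sound ((hL t ht).exists_conj hd hσ hτ q.2 hx)).symm
  · rw [rootCount, ← card_fin_subtype]
    exact Nat.card_congr <| .subtypeEquivRight fun x =>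
      (isSome_follow_rooted Fin.val_injective hσ hτ x t).symm

end Count

set_option maxRecDepth 100000 in
theorem tally_search_246 :
    tally 4 6 24 (search 4 6 24 12 1 (vertexArcs 4 0)) = some 960 := by
  decide +kernel

end UniformMap

/-- There are exactly forty uniform dessins of type (2,4,6) and genus 2, up to
equivalence (simultaneous conjugation of the monodromy pairs). -/
theorem card_uniform_dessins_type_246_genus_two :
    Nat.card (Quot SimConj246) = 40 := by
  have hpair (p : Equiv.Perm (Fin 24) × Equiv.Perm (Fin 24)) :
      IsType246Genus2Pair p ↔ UniformMap.IsUniformMap 4 6 p.1 p.2 :=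
    (UniformMap.isUniformMap_iff_cycleType (by norm_num) (by norm_num) (by simp) (by simp)
      (by simp)).symm
  have hquot : Nat.card (Quot SimConj246) = Nat.card (Quot (@UniformMap.SimConj 4 6 24)) :=
    Nat.card_congr (Quot.congr (Equiv.subtypeEquivRight hpair) fun p q => Iff.rfl)
  have hmass : Nat.card (Quot (@UniformMap.SimConj 4 6 24)) * 24 = 960 :=
    UniformMap.card_quot_simConj_mul (by norm_num) (by norm_num) UniformMap.tally_search_246
  omega
end
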